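/- arXiv:2409.16963 — 8 statements merged into one kernel-verified Lean document; each statement's English description precedes it below -/
import Mathlib

section
/- Let β(x) = (1+x)^{-1} (the t-SNE case). For every solution Y(t) of the gradient flow of the relative entropy there exists a constant C > 0 (depending on n, s, the initial configuration Y(0) and the probabilities p_{ij}, but not on t) such that diam Y(t) ≤ C t^{1/4} for all t ≥ 1. -/
open Filter Topology

/-- The normalizing constant `Z = Σ_{k ≠ ℓ} β(|y_k - y_ℓ|²)`. -/
noncomputable def pairZ {E : Type*} [NormedAddCommGroup E] (β : ℝ → ℝ) {n : ℕ}
    (Y : Fin n → E) : ℝ :=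
  ∑ k : Fin n, ∑ l : Fin n, if k ≠ l then β (‖Y k - Y l‖ ^ 2) else 0

/-- The low-dimensional similarity `q_{ij}(Y) = β(|y_i - y_j|²) / Z(Y)`. -/
noncomputable def qfun {E : Type*} [NormedAddCommGroup E] (β : ℝ → ℝ) {n : ℕ}
    (Y : Fin n → E) (i j : Fin n) : ℝ :=
  β (‖Y i - Y j‖ ^ 2) / pairZ β Y

/-- The derivative `(log β)'` on `[0, ∞)`. -/
noncomputable def lbd (β : ℝ → ℝ) : ℝ → ℝ :=
  fun x => derivWithin (fun y => Real.log (β y)) (Set.Ici 0) x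

/-- `Y : ℝ → Fin n → E` is a solution of the gradient flow of the relative entropy:
`dy_i/dt = 4 Σ_{j ≠ i} (p_{ij} - q_{ij}(Y)) (y_i - y_j) (log β)'(|y_i - y_j|²)` for `t ≥ 0`. -/
def IsGradFlow {E : Type*} [NormedAddCommGroup E] [NormedSpace ℝ E] (β : ℝ → ℝ) {n : ℕ}
    (p : Fin n → Fin n → ℝ) (Y : ℝ → Fin n → E) : Prop :=
  ∀ i : Fin n, ∀ t ∈ Set.Ici (0 : ℝ),
    HasDerivWithinAt (fun u => Y u i)
      (∑ j ∈ Finset.univ.filter (· ≠ i),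
        (4 * (p i j - qfun β (Y t) i j) * lbd β (‖Y t i - Y t j‖ ^ 2)) • (Y t i - Y t j))
      (Set.Ici 0) t

/-- The diameter of the configuration `Y`, i.e. `max_{i,j} |y_i - y_j|`. -/
noncomputable def diamY {E : Type*} [NormedAddCommGroup E] {n : ℕ} (Y : Fin n → E) : ℝ :=
  Metric.diam (Set.range Y)

open Finset in
lemma aux_symm_sum {E : Type*} [NormedAddCommGroup E] [InnerProductSpace ℝ E] {n : ℕ}
    (B : Fin n → Fin n → ℝ) (hB : ∀ i j, B i j = B j i) (y v : Fin n → E) :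
    ∑ i, ∑ j, B i j * inner ℝ (y i - y j) (v i - v j)
      = 2 * ∑ i, inner ℝ (∑ j, B i j • (y i - y j)) (v i) := by
  have h1 : ∀ i j, B i j * inner ℝ (y i - y j) (v i - v j)
      = B i j * inner ℝ (y i - y j) (v i) + B i j * inner ℝ (y j - y i) (v j) := by
    intro i j
    simp only [inner_sub_left, inner_sub_right]; ring
  have h2 : ∑ i, ∑ j, B i j * inner ℝ (y j - y i) (v j)
      = ∑ i, ∑ j, B i j * inner ℝ (y i - y j) (v i) := by
    rw [Finset.sum_comm]
    refine Finset.sum_congr rfl fun i _ => Finset.sum_congr rfl fun j _ => ?_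
    rw [hB]
  simp only [h1, Finset.sum_add_distrib, h2, sum_inner, real_inner_smul_left]
  ring

lemma aux_sum_zero {E : Type*} [NormedAddCommGroup E] [InnerProductSpace ℝ E] {n : ℕ}
    (B : Fin n → Fin n → ℝ) (hB : ∀ i j, B i j = B j i) (y : Fin n → E) :
    ∑ i, ∑ j, B i j • (y i - y j) = 0 := by
  have h : ∑ i, ∑ j, B i j • (y i - y j) = - ∑ i, ∑ j, B i j • (y i - y j) := by
    conv_lhs => rw [Finset.sum_comm]
    rw [← Finset.sum_neg_distrib]
    refine Finset.sum_congr rfl fun i _ => ?_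
    rw [← Finset.sum_neg_distrib]
    refine Finset.sum_congr rfl fun j _ => ?_
    rw [hB, ← smul_neg, neg_sub]
  have h2 : (2 : ℝ) • ∑ i, ∑ j, B i j • (y i - y j) = 0 := by
    rw [two_smul]; nth_rewrite 1 [h]; simp
  exact (smul_eq_zero.1 h2).resolve_left (by norm_num)

lemma aux_lbd (x : ℝ) (hx : 0 ≤ x) : lbd (fun x => (1 + x)⁻¹) x = -(1 + x)⁻¹ := by
  unfold lbd
  have h1 : (1 + x) ≠ 0 := by positivity
  have h : HasDerivAt (fun y : ℝ => Real.log ((1 + y)⁻¹)) (-(1 + x)⁻¹) x := by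
    have h0 : HasDerivAt (fun y : ℝ => 1 + y) 1 x := (hasDerivAt_id x).const_add 1
    have h2 := (h0.log h1).neg
    have h3 : (fun y : ℝ => Real.log ((1 + y)⁻¹)) = -(fun y : ℝ => Real.log (1 + y)) := by
      funext y
      exact Real.log_inv _
    rw [h3, inv_eq_one_div]
    exact h2
  exact h.hasDerivWithinAt.derivWithin (uniqueDiffOn_Ici 0 x hx)

/-- The energy. -/
noncomputable def auxF {E : Type*} [NormedAddCommGroup E] {n : ℕ}
    (p : Fin n → Fin n → ℝ) (Y : Fin n → E) : ℝ :=
  ∑ i, ∑ j, (if i ≠ j then p i j else 0) * Real.log (1 + ‖Y i - Y j‖ ^ 2)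
    + Real.log (∑ i, ∑ j, (if i ≠ j then (1 : ℝ) else 0) * (1 + ‖Y i - Y j‖ ^ 2)⁻¹)

noncomputable def auxS {E : Type*} [NormedAddCommGroup E] {n : ℕ} (Y : Fin n → E) : ℝ :=
  ∑ i, ∑ j, ‖Y i - Y j‖ ^ 2

/-- The normalizer written with weights. -/
noncomputable def auxZ {E : Type*} [NormedAddCommGroup E] {n : ℕ} (Y : Fin n → E) : ℝ :=
  ∑ i, ∑ j, (if i ≠ j then (1 : ℝ) else 0) * (1 + ‖Y i - Y j‖ ^ 2)⁻¹

lemma auxZ_ge {E : Type*} [NormedAddCommGroup E] {n : ℕ} (Y : Fin n → E) (k l : Fin n)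
    (hkl : k ≠ l) : (1 + ‖Y k - Y l‖ ^ 2)⁻¹ ≤ auxZ Y := by
  unfold auxZ
  have hnn : ∀ i j : Fin n, 0 ≤ (if i ≠ j then (1 : ℝ) else 0) * (1 + ‖Y i - Y j‖ ^ 2)⁻¹ := by
    intro i j
    split_ifs <;> positivity
  calc (1 + ‖Y k - Y l‖ ^ 2)⁻¹
      = (if k ≠ l then (1 : ℝ) else 0) * (1 + ‖Y k - Y l‖ ^ 2)⁻¹ := by simp [hkl]
    _ ≤ ∑ j, (if k ≠ j then (1 : ℝ) else 0) * (1 + ‖Y k - Y j‖ ^ 2)⁻¹ :=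
        Finset.single_le_sum (f := fun j => (if k ≠ j then (1 : ℝ) else 0) *
          (1 + ‖Y k - Y j‖ ^ 2)⁻¹) (fun j _ => hnn k j) (Finset.mem_univ l)
    _ ≤ _ := Finset.single_le_sum (f := fun i => ∑ j, (if i ≠ j then (1 : ℝ) else 0) *
          (1 + ‖Y i - Y j‖ ^ 2)⁻¹) (fun i _ => Finset.sum_nonneg fun j _ => hnn i j)
          (Finset.mem_univ k)

/-- Coefficients of the flow. -/
noncomputable def auxA {E : Type*} [NormedAddCommGroup E] {n : ℕ}
    (p : Fin n → Fin n → ℝ) (Y : Fin n → E) (i j : Fin n) : ℝ :=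
  -4 * ((if i ≠ j then p i j else 0)
    - (if i ≠ j then (1 : ℝ) else 0) * (1 + ‖Y i - Y j‖ ^ 2)⁻¹ / auxZ Y)
    * (1 + ‖Y i - Y j‖ ^ 2)⁻¹

lemma auxA_symm {E : Type*} [NormedAddCommGroup E] {n : ℕ}
    (p : Fin n → Fin n → ℝ) (hsymm : ∀ i j, p i j = p j i) (Y : Fin n → E) (i j : Fin n) :
    auxA p Y i j = auxA p Y j i := by
  unfold auxA
  rw [norm_sub_rev, hsymm i j]
  simp only [ne_comm]

lemma aux_rhs {E : Type*} [NormedAddCommGroup E] [NormedSpace ℝ E] {n : ℕ}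
    (p : Fin n → Fin n → ℝ) (Y : Fin n → E) (i : Fin n) :
    (∑ j ∈ Finset.univ.filter (· ≠ i),
        (4 * (p i j - qfun (fun x => (1 + x)⁻¹) Y i j)
          * lbd (fun x => (1 + x)⁻¹) (‖Y i - Y j‖ ^ 2)) • (Y i - Y j))
      = ∑ j, auxA p Y i j • (Y i - Y j) := by
  have hZ : pairZ (fun x => (1 + x)⁻¹) Y = auxZ Y := by
    unfold pairZ auxZ
    simp
  rw [Finset.sum_filter]
  refine Finset.sum_congr rfl fun j _ => ?_
  by_cases h : j = i
  · subst h; simp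
  · have h' : i ≠ j := fun e => h e.symm
    rw [if_pos h, aux_lbd _ (by positivity)]
    unfold auxA qfun
    rw [hZ, if_pos h', if_pos h']
    congr 1
    ring

/-- Static bound. -/
lemma aux_static {E : Type*} [NormedAddCommGroup E] {n : ℕ} (hn : 1 < n)
    (p : Fin n → Fin n → ℝ)
    (hppos : ∀ i j, i ≠ j → 0 < p i j)
    (hpsum : (∑ i, ∑ j, if i ≠ j then p i j else (0 : ℝ)) = 1) (F0 : ℝ) :
    ∃ K : ℝ, 0 < K ∧ ∀ Y : Fin n → E, auxF p Y ≤ F0 →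
      (∑ i, ∑ j, (if i ≠ j then p i j else 0) * (1 + ‖Y i - Y j‖ ^ 2)⁻¹) * auxS Y ≤ K := by
  classical
  have hne : (Finset.univ : Finset (Fin n)).offDiag.Nonempty :=
    ⟨(⟨0, by omega⟩, ⟨1, hn⟩), by simp [Finset.mem_offDiag]⟩
  obtain ⟨m, hm, hmin⟩ := Finset.exists_min_image _ (fun x : Fin n × Fin n => p x.1 x.2) hne
  have hm' : m.1 ≠ m.2 := by simpa [Finset.mem_offDiag] using hm
  set c := p m.1 m.2 with hc
  have hcpos : 0 < c := hppos _ _ hm'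
  have hcle : ∀ i j, i ≠ j → c ≤ p i j := fun i j hij =>
    hmin (i, j) (by simpa [Finset.mem_offDiag] using hij)
  set K := Real.exp (|F0| / c) with hK
  have hK1 : 1 ≤ K := Real.one_le_exp (by positivity)
  have hnpos : (0 : ℝ) < n := by exact_mod_cast (by omega : 0 < n)
  refine ⟨(n : ℝ) * n * K, by positivity, fun Y hF => ?_⟩
  obtain ⟨x, hx, hxmin⟩ := Finset.exists_min_image _
    (fun x : Fin n × Fin n => ‖Y x.1 - Y x.2‖ ^ 2) hne
  obtain ⟨k, l⟩ := x
  have hkl : k ≠ l := by simpa [Finset.mem_offDiag] using hx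
  have hmn : ∀ i j, i ≠ j → ‖Y k - Y l‖ ^ 2 ≤ ‖Y i - Y j‖ ^ 2 := fun i j hij =>
    hxmin (i, j) (by simpa [Finset.mem_offDiag] using hij)
  set r := ‖Y k - Y l‖ ^ 2 with hr
  have hr0 : 0 ≤ r := by positivity
  -- energy lower bound
  have hlogZ : -Real.log (1 + r) ≤ Real.log (auxZ Y) := by
    rw [← Real.log_inv]
    exact Real.log_le_log (by positivity) (auxZ_ge Y k l hkl)
  have hterm : ∀ i j, 0 ≤ (if i ≠ j then p i j else 0) *
      (Real.log (1 + ‖Y i - Y j‖ ^ 2) - Real.log (1 + r)) := by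
    intro i j
    by_cases hij : i = j
    · simp [hij]
    · rw [if_pos hij]
      refine mul_nonneg (hppos i j hij).le (sub_nonneg.2 ?_)
      exact Real.log_le_log (by positivity) (by linarith [hmn i j hij])
  have hsum : ∑ i, ∑ j, (if i ≠ j then p i j else 0) *
      (Real.log (1 + ‖Y i - Y j‖ ^ 2) - Real.log (1 + r)) ≤ F0 := by
    simp only [mul_sub, Finset.sum_sub_distrib, ← Finset.sum_mul, hpsum]
    have : auxF p Y = ∑ i, ∑ j, (if i ≠ j then p i j else 0) * Real.log (1 + ‖Y i - Y j‖ ^ 2)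
      + Real.log (auxZ Y) := rfl
    linarith
  have hbound : ∀ i j, ‖Y i - Y j‖ ^ 2 ≤ K * (1 + r) := by
    intro i j
    by_cases hij : i = j
    · subst hij; simp; positivity
    · have h1 : (if i ≠ j then p i j else 0) *
          (Real.log (1 + ‖Y i - Y j‖ ^ 2) - Real.log (1 + r)) ≤ F0 := by
        refine le_trans ?_ hsum
        refine le_trans (Finset.single_le_sum (f := fun j => (if i ≠ j then p i j else 0) *
          (Real.log (1 + ‖Y i - Y j‖ ^ 2) - Real.log (1 + r))) (fun j _ => hterm i j)
          (Finset.mem_univ j)) ?_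
        exact Finset.single_le_sum (f := fun i => ∑ j, (if i ≠ j then p i j else 0) *
          (Real.log (1 + ‖Y i - Y j‖ ^ 2) - Real.log (1 + r)))
          (fun i _ => Finset.sum_nonneg fun j _ => hterm i j) (Finset.mem_univ i)
      rw [if_pos hij] at h1
      have h0 : 0 ≤ Real.log (1 + ‖Y i - Y j‖ ^ 2) - Real.log (1 + r) :=
        sub_nonneg.2 (Real.log_le_log (by positivity) (by linarith [hmn i j hij]))
      have h2 : Real.log (1 + ‖Y i - Y j‖ ^ 2) - Real.log (1 + r) ≤ |F0| / c := by
        rw [le_div_iff₀ hcpos]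
        have := mul_le_mul_of_nonneg_right (hcle i j hij) h0
        have := le_abs_self F0
        linarith
      have h3 : Real.log (1 + ‖Y i - Y j‖ ^ 2) ≤ |F0| / c + Real.log (1 + r) := by linarith
      have h4 := Real.exp_le_exp.2 h3
      rw [Real.exp_add, Real.exp_log (by positivity), Real.exp_log (by positivity)] at h4
      linarith
  have hS : auxS Y ≤ n * n * (K * (1 + r)) := by
    unfold auxS
    calc _ ≤ ∑ i : Fin n, ∑ j : Fin n, K * (1 + r) :=
          Finset.sum_le_sum fun i _ => Finset.sum_le_sum fun j _ => hbound i j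
      _ = _ := by simp; ring
  have hS0 : 0 ≤ auxS Y := by unfold auxS; positivity
  have hW : ∑ i, ∑ j, (if i ≠ j then p i j else 0) * (1 + ‖Y i - Y j‖ ^ 2)⁻¹ ≤ (1 + r)⁻¹ := by
    calc _ ≤ ∑ i, ∑ j, (if i ≠ j then p i j else 0) * (1 + r)⁻¹ := by
          refine Finset.sum_le_sum fun i _ => Finset.sum_le_sum fun j _ => ?_
          by_cases hij : i = j
          · simp [hij]
          · rw [if_pos hij]
            refine mul_le_mul_of_nonneg_left ?_ (hppos i j hij).le
            exact inv_anti₀ (by positivity) (by linarith [hmn i j hij])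
      _ = _ := by simp only [← Finset.sum_mul, hpsum, one_mul]
  calc _ ≤ (1 + r)⁻¹ * (n * n * (K * (1 + r))) :=
        mul_le_mul hW hS hS0 (by positivity)
    _ = _ := by field_simp

lemma aux_dist {E : Type*} [NormedAddCommGroup E] [InnerProductSpace ℝ E] {n : ℕ}
    (Y : ℝ → Fin n → E) (V : Fin n → E) (t : ℝ) (D : Set ℝ)
    (h : ∀ i, HasDerivWithinAt (fun u => Y u i) (V i) D t) (i j : Fin n) :
    HasDerivWithinAt (fun u => ‖Y u i - Y u j‖ ^ 2)
      (2 * inner ℝ (Y t i - Y t j) (V i - V j)) D t :=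
  ((h i).sub (h j)).norm_sq

lemma aux_dS {E : Type*} [NormedAddCommGroup E] [InnerProductSpace ℝ E] {n : ℕ} (hn : 1 < n)
    (p : Fin n → Fin n → ℝ) (hsymm : ∀ i j, p i j = p j i)
    (hpsum : (∑ i, ∑ j, if i ≠ j then p i j else (0 : ℝ)) = 1)
    (Y : ℝ → Fin n → E) (t : ℝ) (D : Set ℝ)
    (h : ∀ i, HasDerivWithinAt (fun u => Y u i) (∑ j, auxA p (Y t) i j • (Y t i - Y t j)) D t) :
    ∃ d, HasDerivWithinAt (fun u => auxS (Y u)) d D t ∧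
      d ≤ 8 * n * ∑ i, ∑ j, (if i ≠ j then p i j else 0) * (1 + ‖Y t i - Y t j‖ ^ 2)⁻¹ := by
  set V := fun i => ∑ j, auxA p (Y t) i j • (Y t i - Y t j) with hV
  refine ⟨∑ i, ∑ j, 2 * inner ℝ (Y t i - Y t j) (V i - V j), ?_, ?_⟩
  · unfold auxS
    exact HasDerivWithinAt.fun_sum fun i _ => HasDerivWithinAt.fun_sum fun j _ =>
      aux_dist Y V t D h i j
  · have hA := auxA_symm p hsymm (Y t)
    have h0 : ∑ i, V i = 0 := aux_sum_zero _ hA (Y t)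
    have h1 := aux_symm_sum (fun _ _ => (1 : ℝ)) (fun _ _ => rfl) (Y t) V
    have h2 := aux_symm_sum _ hA (Y t) (Y t)
    have h3 : ∑ i, inner ℝ (∑ j, (1 : ℝ) • (Y t i - Y t j)) (V i)
        = n * ∑ i, inner ℝ (V i) (Y t i) := by
      simp only [one_smul, Finset.sum_sub_distrib, Finset.sum_const, Finset.card_univ,
        Fintype.card_fin, inner_sub_left]
      rw [← inner_sum, h0, inner_zero_right, sub_zero, Finset.mul_sum]
      refine Finset.sum_congr rfl fun i _ => ?_
      rw [← Nat.cast_smul_eq_nsmul ℝ, real_inner_smul_left, real_inner_comm]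
    have hZpos : 0 < auxZ (Y t) :=
      lt_of_lt_of_le (by positivity) (auxZ_ge (Y t) ⟨0, by omega⟩ ⟨1, hn⟩ (by simp))
    have h4 : ∀ i j, auxA p (Y t) i j * inner ℝ (Y t i - Y t j) (Y t i - Y t j)
        ≤ -4 * (if i ≠ j then p i j else 0)
          + 4 * ((if i ≠ j then (1 : ℝ) else 0) * (1 + ‖Y t i - Y t j‖ ^ 2)⁻¹ / auxZ (Y t))
          + 4 * ((if i ≠ j then p i j else 0) * (1 + ‖Y t i - Y t j‖ ^ 2)⁻¹) := by
      intro i j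
      rw [real_inner_self_eq_norm_sq]
      unfold auxA
      have hw : (1 + ‖Y t i - Y t j‖ ^ 2)⁻¹ * ‖Y t i - Y t j‖ ^ 2
          = 1 - (1 + ‖Y t i - Y t j‖ ^ 2)⁻¹ := by
        have : 1 + ‖Y t i - Y t j‖ ^ 2 ≠ 0 := by positivity
        field_simp; ring
      have hq : 0 ≤ (if i ≠ j then (1 : ℝ) else 0) * (1 + ‖Y t i - Y t j‖ ^ 2)⁻¹ / auxZ (Y t)
          * (1 + ‖Y t i - Y t j‖ ^ 2)⁻¹ := by
        split_ifs <;> positivity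
      rw [mul_assoc, hw]
      linarith
    have h5 := Finset.sum_le_sum fun i (_ : i ∈ Finset.univ) =>
      Finset.sum_le_sum fun j (_ : j ∈ Finset.univ) => h4 i j
    simp only [Finset.sum_add_distrib, ← Finset.mul_sum, ← Finset.sum_div, hpsum] at h5
    have h6 : (∑ i, ∑ j, (if i ≠ j then (1 : ℝ) else 0) * (1 + ‖Y t i - Y t j‖ ^ 2)⁻¹)
        / auxZ (Y t) = 1 := div_self hZpos.ne'
    rw [h6, h2] at h5
    simp only [one_mul] at h1
    simp only [← Finset.mul_sum]
    rw [h1, h3]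
    have hnn : (0 : ℝ) ≤ n := by positivity
    have := mul_le_mul_of_nonneg_left h5 hnn
    simp only [hV] at this ⊢
    linarith

lemma aux_dF {E : Type*} [NormedAddCommGroup E] [InnerProductSpace ℝ E] {n : ℕ} (hn : 1 < n)
    (p : Fin n → Fin n → ℝ) (hsymm : ∀ i j, p i j = p j i)
    (Y : ℝ → Fin n → E) (t : ℝ) (D : Set ℝ)
    (h : ∀ i, HasDerivWithinAt (fun u => Y u i) (∑ j, auxA p (Y t) i j • (Y t i - Y t j)) D t) :
    ∃ d, HasDerivWithinAt (fun u => auxF p (Y u)) d D t ∧ d ≤ 0 := by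
  set V := fun i => ∑ j, auxA p (Y t) i j • (Y t i - Y t j) with hV
  have hZpos : 0 < auxZ (Y t) :=
    lt_of_lt_of_le (by positivity) (auxZ_ge (Y t) ⟨0, by omega⟩ ⟨1, hn⟩ (by simp))
  have hd : ∀ i j, HasDerivWithinAt (fun u => 1 + ‖Y u i - Y u j‖ ^ 2)
      (2 * inner ℝ (Y t i - Y t j) (V i - V j)) D t := fun i j =>
    (aux_dist Y V t D h i j).const_add 1
  have hpos : ∀ i j, 1 + ‖Y t i - Y t j‖ ^ 2 ≠ 0 := fun i j => by positivity
  have hZ : HasDerivWithinAt (fun u => auxZ (Y u))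
      (∑ i, ∑ j, (if i ≠ j then (1 : ℝ) else 0) *
        (-(2 * inner ℝ (Y t i - Y t j) (V i - V j)) / (1 + ‖Y t i - Y t j‖ ^ 2) ^ 2)) D t := by
    unfold auxZ
    exact HasDerivWithinAt.fun_sum fun i _ => HasDerivWithinAt.fun_sum fun j _ =>
      ((hd i j).fun_inv (hpos i j)).const_mul _
  have hL : HasDerivWithinAt (fun u => ∑ i, ∑ j, (if i ≠ j then p i j else 0) *
        Real.log (1 + ‖Y u i - Y u j‖ ^ 2))
      (∑ i, ∑ j, (if i ≠ j then p i j else 0) *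
        ((2 * inner ℝ (Y t i - Y t j) (V i - V j)) / (1 + ‖Y t i - Y t j‖ ^ 2))) D t :=
    HasDerivWithinAt.fun_sum fun i _ => HasDerivWithinAt.fun_sum fun j _ =>
      ((hd i j).log (hpos i j)).const_mul _
  refine ⟨_, hL.add (hZ.log hZpos.ne'), ?_⟩
  have hA := auxA_symm p hsymm (Y t)
  have h1 := aux_symm_sum _ hA (Y t) V
  rw [Finset.sum_div, ← Finset.sum_add_distrib]
  simp only [Finset.sum_div, ← Finset.sum_add_distrib]
  have h2 : ∀ i j, (if i ≠ j then p i j else 0) *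
        ((2 * inner ℝ (Y t i - Y t j) (V i - V j)) / (1 + ‖Y t i - Y t j‖ ^ 2))
      + (if i ≠ j then (1 : ℝ) else 0) *
        (-(2 * inner ℝ (Y t i - Y t j) (V i - V j)) / (1 + ‖Y t i - Y t j‖ ^ 2) ^ 2) / auxZ (Y t)
      = -(1 / 2) * (auxA p (Y t) i j * inner ℝ (Y t i - Y t j) (V i - V j)) := by
    intro i j
    unfold auxA
    have := hpos i j
    have := hZpos.ne'
    generalize (if i ≠ j then p i j else 0) = a
    generalize (if i ≠ j then (1 : ℝ) else 0) = b
    field_simp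
    ring
  simp only [h2, ← Finset.mul_sum]
  rw [h1]
  have h3 : 0 ≤ ∑ i, inner ℝ (∑ j, auxA p (Y t) i j • (Y t i - Y t j)) (V i) :=
    Finset.sum_nonneg fun i _ => real_inner_self_nonneg
  linarith

/-- **Theorem 1.2 (i).** In the t-SNE case `β(x) = (1+x)⁻¹`, every solution of the gradient
flow of the relative entropy satisfies `diam Y(t) ≤ C t^{1/4}` for `t ≥ 1`. -/
theorem tsne_diameter_upper_bound
    (s n : ℕ) (hs : 1 ≤ s) (hn : s + 1 < n)
    (p : Fin n → Fin n → ℝ)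
    (hsymm : ∀ i j, p i j = p j i)
    (hppos : ∀ i j, i ≠ j → 0 < p i j)
    (hpsum : (∑ i, ∑ j, if i ≠ j then p i j else (0 : ℝ)) = 1)
    (β : ℝ → ℝ) (hβ : β = fun x => (1 + x)⁻¹)
    (Y : ℝ → Fin n → EuclideanSpace ℝ (Fin s))
    (hflow : IsGradFlow β p Y) :
    ∃ C : ℝ, 0 < C ∧ ∀ t : ℝ, 1 ≤ t → diamY (Y t) ≤ C * t ^ ((1 : ℝ) / 4) := by
  subst hβ
  have hn1 : 1 < n := by omega
  have hfl : ∀ t ∈ Set.Ici (0 : ℝ), ∀ i, HasDerivWithinAt (fun u => Y u i)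
      (∑ j, auxA p (Y t) i j • (Y t i - Y t j)) (Set.Ici 0) t := by
    intro t ht i
    rw [← aux_rhs]
    exact hflow i t ht
  have hF : AntitoneOn (fun u => auxF p (Y u)) (Set.Ici 0) := by
    have hx : ∀ t ∈ Set.Ici (0 : ℝ), ∃ d, HasDerivWithinAt (fun u => auxF p (Y u)) d
        (Set.Ici 0) t ∧ d ≤ 0 := fun t ht => aux_dF hn1 p hsymm Y t _ (hfl t ht)
    choose! f' hf' hf0 using hx
    exact antitoneOn_of_hasDerivWithinAt_nonpos (convex_Ici 0)
      (fun t ht => (hf' t ht).continuousWithinAt)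
      (fun t ht => (hf' t (interior_subset ht)).mono interior_subset)
      (fun t ht => hf0 t (interior_subset ht))
  obtain ⟨K, hK, hKb⟩ := aux_static (E := EuclideanSpace ℝ (Fin s)) hn1 p hppos hpsum
    (auxF p (Y 0))
  set L := 16 * n * K with hL
  have hL0 : 0 ≤ L := by positivity
  have hS0 : ∀ t, 0 ≤ auxS (Y t) := fun t => by unfold auxS; positivity
  have hG : AntitoneOn (fun u => auxS (Y u) ^ 2 - L * u) (Set.Ici 0) := by
    have hx : ∀ t ∈ Set.Ici (0 : ℝ), ∃ d, HasDerivWithinAt (fun u => auxS (Y u) ^ 2 - L * u) d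
        (Set.Ici 0) t ∧ d ≤ 0 := by
      intro t ht
      obtain ⟨d, hd, hle⟩ := aux_dS hn1 p hsymm hpsum Y t _ (hfl t ht)
      refine ⟨_, (hd.fun_pow 2).sub ((hasDerivWithinAt_id t _).const_mul L), ?_⟩
      have h1 := hKb (Y t) (hF (Set.mem_Ici.2 le_rfl) ht ht)
      have h2 := mul_le_mul_of_nonneg_right hle (hS0 t)
      have h3 := mul_le_mul_of_nonneg_left h1 (by positivity : (0 : ℝ) ≤ 8 * n)
      simp only [Nat.cast_ofNat, Nat.add_one_sub_one, pow_one, mul_one]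
      linarith
    choose! f' hf' hf0 using hx
    exact antitoneOn_of_hasDerivWithinAt_nonpos (convex_Ici 0)
      (fun t ht => (hf' t ht).continuousWithinAt)
      (fun t ht => (hf' t (interior_subset ht)).mono interior_subset)
      (fun t ht => hf0 t (interior_subset ht))
  set M := auxS (Y 0) ^ 2 + L + 1 with hM
  have hM0 : 0 < M := by positivity
  refine ⟨M ^ ((1 : ℝ) / 4), by positivity, fun t ht => ?_⟩
  have ht0 : (0 : ℝ) ≤ t := by linarith
  have hSt : auxS (Y t) ^ 2 ≤ M * t := by
    have h := hG (Set.mem_Ici.2 le_rfl) (Set.mem_Ici.2 ht0) ht0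
    simp only at h
    nlinarith [sq_nonneg (auxS (Y 0))]
  rw [← Real.mul_rpow hM0.le ht0]
  unfold diamY
  refine Metric.diam_le_of_forall_dist_le (by positivity) ?_
  rintro _ ⟨i, rfl⟩ _ ⟨j, rfl⟩
  rw [dist_eq_norm]
  have hij : ‖Y t i - Y t j‖ ^ 2 ≤ auxS (Y t) := by
    unfold auxS
    refine le_trans (Finset.single_le_sum (f := fun j => ‖Y t i - Y t j‖ ^ 2)
      (fun j _ => by positivity) (Finset.mem_univ j)) ?_
    exact Finset.single_le_sum (f := fun i => ∑ j, ‖Y t i - Y t j‖ ^ 2)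
      (fun i _ => by positivity) (Finset.mem_univ i)
  have h4 : ‖Y t i - Y t j‖ ^ (4 : ℕ) ≤ M * t := by
    calc ‖Y t i - Y t j‖ ^ (4 : ℕ) = (‖Y t i - Y t j‖ ^ 2) ^ 2 := by ring
      _ ≤ auxS (Y t) ^ 2 := by gcongr
      _ ≤ _ := hSt
  calc ‖Y t i - Y t j‖ = (‖Y t i - Y t j‖ ^ (4 : ℕ)) ^ ((1 : ℝ) / 4) := by
        rw [← Real.rpow_natCast, ← Real.rpow_mul (norm_nonneg _)]; norm_num
    _ ≤ _ := Real.rpow_le_rpow (by positivity) h4 (by norm_num)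
end

section
/- Let β(x) = (1+x)^{-1} (the t-SNE case). There exist an integer n > s+1 for some s ≥ 1, a symmetric probability distribution (p_{ij}) with all p_{ij} > 0, an initial configuration Y_0 ⊂ ℝ^s, a solution Y(t) of the gradient flow of the relative entropy with Y(0) = Y_0, and a constant c > 0, such that diam Y(t) ≥ c t^{1/4} for all t ≥ 0. -/
open Filter Topology

namespace TsneAux

/-- The time, as a function of the logarithm of the scale. -/
noncomputable def F (b : ℝ) : ℝ :=
  5 / 4 * (6 * Real.exp (4 * b) - 5 * Real.exp (2 * b) + b
    + 35 / 2 * Real.log (Real.exp (2 * b) + 2))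

noncomputable def dF (b : ℝ) : ℝ :=
  5 / 2 * ((1 + 3 * Real.exp b ^ 2) * (1 + Real.exp b ^ 2) * (1 + 4 * Real.exp b ^ 2))
    / (2 + Real.exp b ^ 2)

lemma exp_two (b : ℝ) : Real.exp (2 * b) = Real.exp b ^ 2 := by
  rw [← Real.exp_nat_mul]; norm_num

lemma exp_four (b : ℝ) : Real.exp (4 * b) = Real.exp b ^ 4 := by
  rw [← Real.exp_nat_mul]; norm_num

lemma dF_pos (b : ℝ) : 0 < dF b := by unfold dF; positivity

lemma hasDerivAt_F (b : ℝ) : HasDerivAt F (dF b) b := by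
  have h4 : HasDerivAt (fun b : ℝ => Real.exp (4 * b)) (Real.exp (4 * b) * (4 * 1)) b :=
    ((hasDerivAt_id b).const_mul 4).exp
  have h2 : HasDerivAt (fun b : ℝ => Real.exp (2 * b)) (Real.exp (2 * b) * (2 * 1)) b :=
    ((hasDerivAt_id b).const_mul 2).exp
  have hl := (h2.add_const 2).log (by positivity)
  have h := ((((h4.const_mul 6).sub (h2.const_mul 5)).add (hasDerivAt_id b)).add
    (hl.const_mul (35 / 2))).const_mul (5 / 4)
  refine HasDerivAt.congr_deriv h ?_
  rw [exp_two, exp_four]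
  unfold dF
  have : Real.exp b ^ 2 + 2 ≠ 0 := by positivity
  have : 2 + Real.exp b ^ 2 ≠ 0 := by positivity
  field_simp
  ring

lemma F_mono : StrictMono F :=
  strictMono_of_hasDerivAt_pos hasDerivAt_F dF_pos

lemma F_cont : Continuous F :=
  continuous_iff_continuousAt.2 fun b => (hasDerivAt_F b).continuousAt

lemma F_surj : Function.Surjective F := by
  apply F_cont.surjective
  · refine tendsto_atTop_mono (f := fun b => 5 / 4 * (b - 2)) (fun b => ?_) ?_
    · unfold F
      rw [exp_two, exp_four]
      have : 0 ≤ Real.log (Real.exp b ^ 2 + 2) :=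
        Real.log_nonneg (by nlinarith [sq_nonneg (Real.exp b)])
      nlinarith [sq_nonneg (Real.exp b ^ 2 - 1 / 2)]
    · exact (tendsto_atTop_add_const_right _ (-2) tendsto_id).const_mul_atTop (by norm_num)
  · have h : Tendsto (fun b : ℝ => 5 / 4 * (b + (6 + 35 / 2 * Real.log 3))) atBot atBot :=
      (tendsto_atBot_add_const_right _ _ tendsto_id).const_mul_atBot (by norm_num)
    refine tendsto_atBot_mono' _ ?_ h
    filter_upwards [eventually_le_atBot (0 : ℝ)] with b hb
    unfold F
    rw [exp_two, exp_four]
    have h0 := Real.exp_pos b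
    have h1 : Real.exp b ≤ 1 := Real.exp_le_one_iff.2 hb
    have h2 : Real.exp b ^ 2 ≤ 1 := by nlinarith
    have h4 : Real.exp b ^ 4 ≤ 1 := by nlinarith [sq_nonneg (Real.exp b)]
    have : Real.log (Real.exp b ^ 2 + 2) ≤ Real.log 3 :=
      Real.log_le_log (by positivity) (by linarith)
    nlinarith [sq_nonneg (Real.exp b)]

noncomputable def Fi : ℝ ≃o ℝ := F_mono.orderIsoOfSurjective F F_surj

lemma F_Fi (t : ℝ) : F (Fi.symm t) = t := Fi.apply_symm_apply t

noncomputable def a (t : ℝ) : ℝ := Real.exp (Fi.symm (t + F 0))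

lemma a_pos (t : ℝ) : 0 < a t := Real.exp_pos _

lemma hasDerivAt_a (t : ℝ) : HasDerivAt a
    (2 / 5 * a t * (2 + a t ^ 2) / ((1 + 3 * a t ^ 2) * (1 + a t ^ 2) * (1 + 4 * a t ^ 2))) t := by
  have h1 : HasDerivAt Fi.symm (dF (Fi.symm (t + F 0)))⁻¹ (t + F 0) :=
    HasDerivAt.of_local_left_inverse Fi.symm.continuous.continuousAt (hasDerivAt_F _)
      (dF_pos _).ne' (Eventually.of_forall F_Fi)
  have h2 := (h1.comp_add_const t (F 0)).exp
  refine HasDerivAt.congr_deriv h2 ?_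
  unfold dF a
  field_simp

lemma growth (t : ℝ) (ht : 0 ≤ t) : t ≤ 256 * a t ^ 4 := by
  have h1 : 1 ≤ a t := by
    unfold a
    rw [Real.one_le_exp_iff, ← F_mono.le_iff_le, F_Fi]; linarith
  have h0 : 0 ≤ F 0 := by
    unfold F
    have : 0 ≤ Real.log (1 + 2) := Real.log_nonneg (by norm_num)
    simp only [mul_zero, Real.exp_zero]
    generalize Real.log (1 + 2) = L at this
    linarith
  have h2 := F_Fi (t + F 0)
  have hE : Real.exp (Fi.symm (t + F 0)) = a t := rfl
  have h3 : Fi.symm (t + F 0) + 1 ≤ a t := Real.add_one_le_exp _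
  have h4 : Real.log (a t ^ 2 + 2) ≤ a t ^ 2 + 2 - 1 := Real.log_le_sub_one_of_pos (by positivity)
  generalize F 0 = f0 at h0 h2 h3 hE
  unfold F at h2
  rw [exp_two, exp_four, hE] at h2
  have h5 : a t ≤ a t ^ 4 := le_self_pow₀ h1 (by norm_num)
  have h6 : a t ^ 2 ≤ a t ^ 4 := pow_le_pow_right₀ h1 (by norm_num)
  nlinarith

noncomputable def w : Fin 3 → ℝ := ![-1, 0, 1]

noncomputable def v : EuclideanSpace ℝ (Fin 1) := EuclideanSpace.single 0 1

lemma norm_v : ‖v‖ = 1 := by simp [v]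

noncomputable def Y (t : ℝ) (i : Fin 3) : EuclideanSpace ℝ (Fin 1) := (w i * a t) • v

lemma Y_sub (t : ℝ) (i j : Fin 3) : Y t i - Y t j = ((w i - w j) * a t) • v := by
  unfold Y; rw [← sub_smul]; ring_nf

lemma Y_norm (t : ℝ) (i j : Fin 3) : ‖Y t i - Y t j‖ ^ 2 = (w i - w j) ^ 2 * a t ^ 2 := by
  rw [Y_sub, norm_smul, norm_v, mul_one, Real.norm_eq_abs, sq_abs, mul_pow]

noncomputable def p : Fin 3 → Fin 3 → ℝ :=
  ![![0, 7 / 30, 1 / 30], ![7 / 30, 0, 7 / 30], ![1 / 30, 7 / 30, 0]]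

lemma lbd_eq (x : ℝ) (hx : 0 ≤ x) : lbd (fun x => (1 + x)⁻¹) x = -(1 + x)⁻¹ := by
  unfold lbd
  have h : HasDerivAt (fun y : ℝ => Real.log ((1 + y)⁻¹)) (-(1 + x)⁻¹) x := by
    have := (((hasDerivAt_id x).const_add 1).log (by simp; positivity)).neg
    simp only [Real.log_inv]
    refine HasDerivAt.congr_deriv this ?_
    simp
  exact h.hasDerivWithinAt.derivWithin (uniqueDiffOn_Ici 0 x hx)

lemma flow : IsGradFlow (fun x => (1 + x)⁻¹) p Y := by
  intro i t _
  have hA : HasDerivAt (fun u => Y u i) ((w i * (2 / 5 * a t * (2 + a t ^ 2) /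
      ((1 + 3 * a t ^ 2) * (1 + a t ^ 2) * (1 + 4 * a t ^ 2)))) • v) t :=
    ((hasDerivAt_a t).const_mul (w i)).smul_const v
  refine (hA.congr_deriv ?_).hasDerivWithinAt
  have ha := a_pos t
  have hZ : pairZ (fun x => (1 + x)⁻¹) (Y t) =
      6 * (1 + 3 * a t ^ 2) / ((1 + a t ^ 2) * (1 + 4 * a t ^ 2)) := by
    unfold pairZ
    simp only [Y_norm, Fin.sum_univ_three]
    simp [w]
    norm_num
    field_simp
    ring
  simp only [qfun, hZ, Y_norm]
  simp_rw [Y_sub, smul_smul]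
  rw [← Finset.sum_smul]
  congr 1
  rw [Finset.sum_filter, Fin.sum_univ_three]
  rw [lbd_eq _ (by positivity), lbd_eq _ (by positivity), lbd_eq _ (by positivity)]
  fin_cases i <;> simp [w, p] <;> norm_num <;> field_simp <;> ring

end TsneAux

/-- **Theorem 1.3 (i).** In the t-SNE case `β(x) = (1+x)⁻¹`, there are a dimension `s ≥ 1`,
a number of points `n > s+1`, a symmetric positive probability distribution `(p_{ij})`,
a solution `Y(t)` of the gradient flow of the relative entropy, and a constant `c > 0`
such that `diam Y(t) ≥ c t^{1/4}` for all `t ≥ 0`. -/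
theorem tsne_diameter_lower_bound_example
    (β : ℝ → ℝ) (hβ : β = fun x => (1 + x)⁻¹) :
    ∃ (s n : ℕ) (p : Fin n → Fin n → ℝ)
      (Y : ℝ → Fin n → EuclideanSpace ℝ (Fin s)) (c : ℝ),
      1 ≤ s ∧ s + 1 < n ∧
      (∀ i j, p i j = p j i) ∧ (∀ i j, i ≠ j → 0 < p i j) ∧
      (∑ i, ∑ j, if i ≠ j then p i j else (0 : ℝ)) = 1 ∧
      IsGradFlow β p Y ∧ 0 < c ∧
      ∀ t : ℝ, 0 ≤ t → c * t ^ ((1 : ℝ) / 4) ≤ diamY (Y t) := by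
  subst hβ
  refine ⟨1, 3, TsneAux.p, TsneAux.Y, 1 / 2, le_refl _, by norm_num, ?_, ?_, ?_,
    TsneAux.flow, by norm_num, ?_⟩
  · intro i j
    fin_cases i <;> fin_cases j <;> simp [TsneAux.p]
  · intro i j hij
    fin_cases i <;> fin_cases j <;> simp [TsneAux.p] at hij ⊢
  · simp [Fin.sum_univ_three, TsneAux.p]
    norm_num
  · intro t ht
    have ha := TsneAux.a_pos t
    have h1 : dist (TsneAux.Y t 2) (TsneAux.Y t 0) ≤ diamY (TsneAux.Y t) :=
      Metric.dist_le_diam_of_mem (Set.finite_range _).isBounded ⟨2, rfl⟩ ⟨0, rfl⟩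
    have h2 : dist (TsneAux.Y t 2) (TsneAux.Y t 0) = 2 * TsneAux.a t := by
      rw [dist_eq_norm, TsneAux.Y_sub, norm_smul, TsneAux.norm_v, mul_one, Real.norm_eq_abs,
        abs_of_nonneg]
      · simp [TsneAux.w]; norm_num
      · simp [TsneAux.w]; positivity
    have h3 : t ^ ((1 : ℝ) / 4) ≤ 4 * TsneAux.a t := by
      have h4 : t ≤ (4 * TsneAux.a t) ^ 4 := by
        have := TsneAux.growth t ht
        rw [mul_pow]; norm_num; exact this
      calc t ^ ((1 : ℝ) / 4) ≤ ((4 * TsneAux.a t) ^ 4) ^ ((1 : ℝ) / 4) :=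
            Real.rpow_le_rpow ht h4 (by norm_num)
        _ = 4 * TsneAux.a t := by
            rw [one_div]
            exact_mod_cast Real.pow_rpow_inv_natCast (by positivity : 0 ≤ 4 * TsneAux.a t)
              (by norm_num : (4 : ℕ) ≠ 0)
    linarith
end

section
/- Assume (A1) and (A2). Let Y(t) be a solution of the gradient flow of the relative entropy. If p_{1j} = p_{2j} for all j > 2 and y_1(0) = y_2(0), then there exists a constant C > 0 (depending on n, s, Y(0), the p_{ij} and β, but not on t) such that diam Y(t) ≤ C for all t ≥ 0. -/
open Filter Topology

section Helpers

variable {E : Type*} [NormedAddCommGroup E] [InnerProductSpace ℝ E]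

lemma aux_radial_contDiff (f : ℝ → ℝ) (hf : ContDiffOn ℝ 1 f (Set.Ici 0)) :
    ContDiff ℝ 1 (fun u : E => f (‖u‖ ^ 2) • u) := by
  have h1 : ContDiff ℝ 1 (fun u : E => ‖u‖ ^ 2) := contDiff_norm_sq ℝ
  have h2 : ContDiffOn ℝ 1 (fun u : E => f (‖u‖ ^ 2)) Set.univ :=
    hf.comp h1.contDiffOn (fun u _ => by simp only [Set.mem_Ici]; positivity)
  exact (contDiffOn_univ.1 h2).smul contDiff_id

lemma aux_radial_lip [FiniteDimensional ℝ E] (f : ℝ → ℝ) (hf : ContDiffOn ℝ 1 f (Set.Ici 0))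
    (R : ℝ) :
    ∃ K : ℝ, 0 ≤ K ∧ ∀ u v : E, ‖u‖ ≤ R → ‖v‖ ≤ R →
      ‖f (‖u‖ ^ 2) • u - f (‖v‖ ^ 2) • v‖ ≤ K * ‖u - v‖ := by
  have h := (aux_radial_contDiff (E := E) f hf).contDiffOn (s := Metric.closedBall 0 R)
  obtain ⟨K, hK⟩ := h.exists_lipschitzOnWith one_ne_zero (convex_closedBall 0 R)
    (isCompact_closedBall 0 R)
  refine ⟨K, K.2, fun u v hu hv => ?_⟩
  exact hK.norm_sub_le (by simpa using hu) (by simpa using hv)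

lemma aux_pairZ_eq (β : ℝ → ℝ) {n : ℕ} (Y : Fin n → E) :
    pairZ β Y = (∑ k, ∑ l, β (‖Y k - Y l‖ ^ 2)) - n * β 0 := by
  unfold pairZ
  have : ∀ k : Fin n, (∑ l : Fin n, if k ≠ l then β (‖Y k - Y l‖ ^ 2) else 0)
      = (∑ l, β (‖Y k - Y l‖ ^ 2)) - β 0 := by
    intro k
    have h : ∀ l, (if k ≠ l then β (‖Y k - Y l‖ ^ 2) else 0)
        = β (‖Y k - Y l‖ ^ 2) - (if k = l then β 0 else 0) := by
      intro l
      by_cases hkl : k = l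
      · subst hkl; simp
      · simp [hkl]
    simp only [h, Finset.sum_sub_distrib, Finset.sum_ite_eq, Finset.mem_univ, if_true]
  rw [Finset.sum_congr rfl fun k _ => this k, Finset.sum_sub_distrib]
  simp

lemma aux_pairZ_ge (β : ℝ → ℝ) (hβpos : ∀ x, 0 ≤ x → 0 < β x) {n : ℕ} (Y : Fin n → E)
    (i j : Fin n) (hij : i ≠ j) : β (‖Y i - Y j‖ ^ 2) ≤ pairZ β Y := by
  unfold pairZ
  have hnn : ∀ k l : Fin n, 0 ≤ (if k ≠ l then β (‖Y k - Y l‖ ^ 2) else 0) := by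
    intro k l
    split_ifs
    · exact (hβpos _ (by positivity)).le
    · exact le_rfl
  calc β (‖Y i - Y j‖ ^ 2) = (if i ≠ j then β (‖Y i - Y j‖ ^ 2) else 0) := by simp [hij]
    _ ≤ ∑ l, (if i ≠ l then β (‖Y i - Y l‖ ^ 2) else 0) :=
      Finset.single_le_sum (f := fun l => if i ≠ l then β (‖Y i - Y l‖ ^ 2) else 0)
        (fun l _ => hnn i l) (Finset.mem_univ j)
    _ ≤ _ := Finset.single_le_sum
        (f := fun k => ∑ l, (if k ≠ l then β (‖Y k - Y l‖ ^ 2) else 0))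
        (fun k _ => Finset.sum_nonneg fun l _ => hnn k l) (Finset.mem_univ i)

/-- The velocity with the sum over all indices. -/
noncomputable def velAux (β : ℝ → ℝ) {n : ℕ} (p : Fin n → Fin n → ℝ) (Y : Fin n → E)
    (i : Fin n) : E :=
  ∑ j, (4 * (p i j - qfun β Y i j) * lbd β (‖Y i - Y j‖ ^ 2)) • (Y i - Y j)

lemma aux_flow (β : ℝ → ℝ) {n : ℕ} (p : Fin n → Fin n → ℝ) (Y : ℝ → Fin n → E)
    (h : IsGradFlow β p Y) (i : Fin n) (t : ℝ) (ht : 0 ≤ t) :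
    HasDerivWithinAt (fun u => Y u i) (velAux β p (Y t) i) (Set.Ici 0) t := by
  have := h i t ht
  convert this using 1
  unfold velAux
  rw [Finset.sum_filter]
  refine Finset.sum_congr rfl fun j _ => ?_
  by_cases hj : j = i
  · subst hj; simp
  · simp [hj]

lemma aux_algebra {n : ℕ} (c : Fin n → Fin n → ℝ) (hc : ∀ i j, c i j = c j i)
    (Y v : Fin n → E) (hv : ∀ i, v i = ∑ j, (4 * c i j) • (Y i - Y j)) :
    ∑ i, ∑ j, c i j * (2 * inner ℝ (Y i - Y j) (v i - v j)) = ∑ i, ‖v i‖ ^ 2 := by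
  have h1 : ∑ i, ∑ j, c i j * (2 * inner ℝ (Y i - Y j) (v i - v j))
      = ∑ i, ∑ j, c i j * (2 * inner ℝ (Y i - Y j) (v i))
        + ∑ i, ∑ j, c j i * (2 * inner ℝ (Y j - Y i) (v j)) := by
    rw [← Finset.sum_add_distrib]
    refine Finset.sum_congr rfl fun i _ => ?_
    rw [← Finset.sum_add_distrib]
    refine Finset.sum_congr rfl fun j _ => ?_
    rw [hc j i, ← neg_sub (Y i) (Y j), inner_neg_left, inner_sub_right]
    ring
  rw [h1, Finset.sum_comm (f := fun i j => c j i * (2 * inner ℝ (Y j - Y i) (v j))),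
    ← Finset.sum_add_distrib]
  refine Finset.sum_congr rfl fun i _ => ?_
  rw [← real_inner_self_eq_norm_sq]
  conv_rhs => rw [hv i, sum_inner]
  rw [← Finset.sum_add_distrib]
  refine Finset.sum_congr rfl fun j _ => ?_
  rw [← hv i, inner_smul_left]
  simp
  ring

lemma aux_lbd_contDiff (β : ℝ → ℝ) (hβpos : ∀ x, 0 ≤ x → 0 < β x)
    (hβsmooth : ContDiffOn ℝ (⊤ : ℕ∞) β (Set.Ici 0)) : ContDiffOn ℝ 1 (lbd β) (Set.Ici 0) := by
  have h : ContDiffOn ℝ (⊤ : ℕ∞) (fun y => Real.log (β y)) (Set.Ici 0) :=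
    hβsmooth.log fun x hx => (hβpos x hx).ne'
  exact h.derivWithin (uniqueDiffOn_Ici 0)
    (WithTop.coe_le_coe.2 (le_top : ((1 : ℕ∞) + 1) ≤ ⊤))

lemma aux_log_deriv (β : ℝ → ℝ) (hβpos : ∀ x, 0 ≤ x → 0 < β x)
    (hβsmooth : ContDiffOn ℝ (⊤ : ℕ∞) β (Set.Ici 0)) (x : ℝ) (hx : 0 ≤ x) :
    HasDerivWithinAt (fun y => Real.log (β y)) (lbd β x) (Set.Ici 0) x := by
  have h : ContDiffOn ℝ (⊤ : ℕ∞) (fun y => Real.log (β y)) (Set.Ici 0) :=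
    hβsmooth.log fun x hx => (hβpos x hx).ne'
  exact (h.differentiableOn (by simp) x hx).hasDerivWithinAt

lemma aux_beta_deriv (β : ℝ → ℝ) (hβpos : ∀ x, 0 ≤ x → 0 < β x)
    (hβsmooth : ContDiffOn ℝ (⊤ : ℕ∞) β (Set.Ici 0)) (x : ℝ) (hx : 0 ≤ x) :
    HasDerivWithinAt β (β x * lbd β x) (Set.Ici 0) x := by
  have h := (aux_log_deriv β hβpos hβsmooth x hx).exp
  rw [Real.exp_log (hβpos x hx)] at h
  exact h.congr (fun y hy => (Real.exp_log (hβpos y hy)).symm) (Real.exp_log (hβpos x hx)).symm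

lemma aux_dist_deriv (β : ℝ → ℝ) {n : ℕ} (p : Fin n → Fin n → ℝ) (Y : ℝ → Fin n → E)
    (h : IsGradFlow β p Y) (i j : Fin n) (t : ℝ) (ht : 0 ≤ t) :
    HasDerivWithinAt (fun u => ‖Y u i - Y u j‖ ^ 2)
      (2 * inner ℝ (Y t i - Y t j) (velAux β p (Y t) i - velAux β p (Y t) j)) (Set.Ici 0) t :=
  ((aux_flow β p Y h i t ht).fun_sub (aux_flow β p Y h j t ht)).norm_sq

lemma aux_Z_deriv (β : ℝ → ℝ) (hβpos : ∀ x, 0 ≤ x → 0 < β x)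
    (hβsmooth : ContDiffOn ℝ (⊤ : ℕ∞) β (Set.Ici 0))
    {n : ℕ} (p : Fin n → Fin n → ℝ) (Y : ℝ → Fin n → E)
    (h : IsGradFlow β p Y) (t : ℝ) (ht : 0 ≤ t) :
    HasDerivWithinAt (fun u => pairZ β (Y u))
      (∑ i, ∑ j, β (‖Y t i - Y t j‖ ^ 2) * lbd β (‖Y t i - Y t j‖ ^ 2) *
      (2 * inner ℝ (Y t i - Y t j) (velAux β p (Y t) i - velAux β p (Y t) j))) (Set.Ici 0) t := by
  simp only [aux_pairZ_eq]
  refine HasDerivWithinAt.sub_const _ ?_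
  refine HasDerivWithinAt.fun_sum fun i _ => HasDerivWithinAt.fun_sum fun j _ => ?_
  exact (aux_beta_deriv β hβpos hβsmooth _ (by positivity)).comp t
    (aux_dist_deriv β p Y h i j t ht) (fun u _ => by simp only [Set.mem_Ici]; positivity)

lemma aux_L_deriv (β : ℝ → ℝ) (hβpos : ∀ x, 0 ≤ x → 0 < β x)
    (hβsmooth : ContDiffOn ℝ (⊤ : ℕ∞) β (Set.Ici 0))
    {n : ℕ} (p : Fin n → Fin n → ℝ) (Y : ℝ → Fin n → E)
    (h : IsGradFlow β p Y) (t : ℝ) (ht : 0 ≤ t) :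
    HasDerivWithinAt (fun u => ∑ i, ∑ j, p i j * Real.log (β (‖Y u i - Y u j‖ ^ 2)))
      (∑ i, ∑ j, p i j * (lbd β (‖Y t i - Y t j‖ ^ 2) *
      (2 * inner ℝ (Y t i - Y t j) (velAux β p (Y t) i - velAux β p (Y t) j)))) (Set.Ici 0) t := by
  refine HasDerivWithinAt.fun_sum fun i _ => HasDerivWithinAt.fun_sum fun j _ => ?_
  refine HasDerivWithinAt.const_mul _ ?_
  exact (aux_log_deriv β hβpos hβsmooth _ (by positivity)).comp t
    (aux_dist_deriv β p Y h i j t ht) (fun u _ => by simp only [Set.mem_Ici]; positivity)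

lemma aux_energy (β : ℝ → ℝ) (hβpos : ∀ x, 0 ≤ x → 0 < β x)
    (hβsmooth : ContDiffOn ℝ (⊤ : ℕ∞) β (Set.Ici 0))
    {n : ℕ} (p : Fin n → Fin n → ℝ) (hsymm : ∀ i j, p i j = p j i) (Y : ℝ → Fin n → E)
    (h : IsGradFlow β p Y) (hZ : ∀ t, 0 < pairZ β (Y t)) :
    AntitoneOn (fun u => Real.log (pairZ β (Y u))
      - ∑ i, ∑ j, p i j * Real.log (β (‖Y u i - Y u j‖ ^ 2))) (Set.Ici 0) := by
  have key : ∀ t, 0 ≤ t → HasDerivWithinAt (fun u => Real.log (pairZ β (Y u))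
      - ∑ i, ∑ j, p i j * Real.log (β (‖Y u i - Y u j‖ ^ 2)))
      (-∑ i, ‖velAux β p (Y t) i‖ ^ 2) (Set.Ici 0) t := by
    intro t ht
    have h1 := ((aux_Z_deriv β hβpos hβsmooth p Y h t ht).log (hZ t).ne').fun_sub
      (aux_L_deriv β hβpos hβsmooth p Y h t ht)
    refine h1.congr_deriv ?_
    symm
    rw [← aux_algebra (fun i j => (p i j - qfun β (Y t) i j) * lbd β (‖Y t i - Y t j‖ ^ 2))
      (fun i j => by simp only [qfun, hsymm i j, norm_sub_rev (Y t i) (Y t j)]) (Y t)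
      (velAux β p (Y t)) (fun i => by simp only [velAux, mul_assoc])]
    rw [Finset.sum_div, ← Finset.sum_sub_distrib, ← Finset.sum_neg_distrib]
    refine Finset.sum_congr rfl fun i _ => ?_
    rw [Finset.sum_div, ← Finset.sum_sub_distrib, ← Finset.sum_neg_distrib]
    refine Finset.sum_congr rfl fun j _ => ?_
    simp only [qfun]
    ring
  refine antitoneOn_of_hasDerivWithinAt_nonpos (convex_Ici 0)
    (fun t ht => (key t ht).continuousWithinAt)
    (fun t ht => (key t (interior_subset ht)).mono interior_subset) (fun t _ => ?_)
  have : 0 ≤ ∑ i, ‖velAux β p (Y t) i‖ ^ 2 := Finset.sum_nonneg fun i _ => by positivity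
  linarith

lemma aux_coincide [FiniteDimensional ℝ E] (β : ℝ → ℝ) (hβpos : ∀ x, 0 ≤ x → 0 < β x)
    (hβsmooth : ContDiffOn ℝ (⊤ : ℕ∞) β (Set.Ici 0))
    {n : ℕ} (p : Fin n → Fin n → ℝ) (Y : ℝ → Fin n → E)
    (h : IsGradFlow β p Y) (hZ : ∀ t, 0 < pairZ β (Y t)) (a b : Fin n)
    (hp : ∀ j, j ≠ a → j ≠ b → p a j = p b j) (h0 : Y 0 a = Y 0 b) (T : ℝ) (hT : 0 ≤ T) :
    Y T a = Y T b := by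
  have hcont : ∀ i, ContinuousOn (fun t => Y t i) (Set.Ici 0) :=
    fun i t ht => (aux_flow β p Y h i t ht).continuousWithinAt
  have hsub : Set.Icc 0 T ⊆ Set.Ici (0 : ℝ) := Set.Icc_subset_Ici_self
  -- bound on distances
  obtain ⟨R, hR⟩ : ∃ R, ∀ t ∈ Set.Icc 0 T, ∀ i j, ‖Y t i - Y t j‖ ≤ R := by
    have hc : ContinuousOn (fun t => ∑ i, ∑ j, ‖Y t i - Y t j‖) (Set.Icc 0 T) := by
      refine continuousOn_finsetSum _ fun i _ => continuousOn_finsetSum _ fun j _ => ?_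
      exact (((hcont i).sub (hcont j)).norm).mono hsub
    obtain ⟨R, hR⟩ := isCompact_Icc.exists_bound_of_continuousOn hc
    refine ⟨R, fun t ht i j => le_trans ?_ ((le_abs_self _).trans (hR t ht))⟩
    exact (Finset.single_le_sum (f := fun j => ‖Y t i - Y t j‖)
      (fun _ _ => norm_nonneg _) (Finset.mem_univ j)).trans
      (Finset.single_le_sum (f := fun i => ∑ j, ‖Y t i - Y t j‖)
      (fun _ _ => Finset.sum_nonneg fun _ _ => norm_nonneg _) (Finset.mem_univ i))
  obtain ⟨W, hW⟩ : ∃ W, ∀ t ∈ Set.Icc 0 T, ‖(pairZ β (Y t))⁻¹‖ ≤ W := by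
    refine isCompact_Icc.exists_bound_of_continuousOn ?_
    refine ContinuousOn.inv₀ (fun t ht => ?_) (fun t _ => (hZ t).ne')
    exact ((aux_Z_deriv β hβpos hβsmooth p Y h t (hsub ht)).continuousWithinAt).mono hsub
  have hlam := aux_lbd_contDiff β hβpos hβsmooth
  obtain ⟨K, hK0, hK⟩ := aux_radial_lip (E := E) (lbd β) hlam R
  obtain ⟨K', hK0', hK'⟩ := aux_radial_lip (E := E) (fun x => β x * lbd β x)
    ((hβsmooth.of_le (by exact_mod_cast le_top)).mul hlam) R
  set P : ℝ := ∑ i, ∑ j, |p i j| with hP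
  have hPle : ∀ i j, |p i j| ≤ P := fun i j =>
    (Finset.single_le_sum (f := fun j => |p i j|)
      (fun _ _ => abs_nonneg _) (Finset.mem_univ j)).trans
      (Finset.single_le_sum (f := fun i => ∑ j, |p i j|)
      (fun _ _ => Finset.sum_nonneg fun _ _ => abs_nonneg _) (Finset.mem_univ i))
  have hvel : ∀ t i, velAux β p (Y t) i = ∑ j, ((4 * p i j) •
      (lbd β (‖Y t i - Y t j‖ ^ 2) • (Y t i - Y t j)) - (4 * (pairZ β (Y t))⁻¹) •
      ((β (‖Y t i - Y t j‖ ^ 2) * lbd β (‖Y t i - Y t j‖ ^ 2)) • (Y t i - Y t j))) := by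
    intro t i
    refine Finset.sum_congr rfl fun j _ => ?_
    rw [smul_smul, smul_smul, ← sub_smul]
    congr 1
    simp only [qfun]
    ring
  have hest : ∀ t ∈ Set.Icc 0 T, ∀ q : ℝ, |q| ≤ P → ∀ u v : E, ‖u‖ ≤ R → ‖v‖ ≤ R →
      ‖((4 * q) • (lbd β (‖u‖ ^ 2) • u) - (4 * (pairZ β (Y t))⁻¹) •
        ((β (‖u‖ ^ 2) * lbd β (‖u‖ ^ 2)) • u)) - ((4 * q) • (lbd β (‖v‖ ^ 2) • v) -
        (4 * (pairZ β (Y t))⁻¹) • ((β (‖v‖ ^ 2) * lbd β (‖v‖ ^ 2)) • v))‖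
        ≤ (4 * P * K + 4 * W * K') * ‖u - v‖ := by
    intro t ht q hq u v hu hv
    rw [sub_sub_sub_comm, ← smul_sub, ← smul_sub]
    refine (norm_sub_le _ _).trans ?_
    rw [norm_smul, norm_smul, norm_mul, norm_mul, add_mul]
    have e1 := hK u v hu hv
    have e2 := hK' u v hu hv
    have hW' := hW t ht
    have hWn : 0 ≤ W := (norm_nonneg _).trans hW'
    have hPn : 0 ≤ P := (abs_nonneg _).trans hq
    have n4 : ‖(4 : ℝ)‖ = 4 := by norm_num
    rw [n4, Real.norm_eq_abs q, mul_assoc _ K, mul_assoc _ K']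
    gcongr
  have hzero : ∀ x ∈ Set.Icc 0 T, Y x a - Y x b = 0 := by
    refine eq_zero_of_abs_deriv_le_mul_abs_self_of_eq_zero_right
      (f' := fun t => velAux β p (Y t) a - velAux β p (Y t) b)
      (K := n * (4 * P * K + 4 * W * K'))
      (((hcont a).sub (hcont b)).mono hsub)
      (fun x hx => ?_) (by simp [h0]) (fun t ht => ?_)
    · exact ((aux_flow β p Y h a x hx.1).fun_sub (aux_flow β p Y h b x hx.1)).mono
        (Set.Ici_subset_Ici.2 hx.1)
    · have ht' : t ∈ Set.Icc 0 T := ⟨ht.1, ht.2.le⟩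
      have hR0 : ‖(0 : E)‖ ≤ R := by rw [norm_zero]; exact (norm_nonneg _).trans (hR t ht' a a)
      rw [hvel, hvel, ← Finset.sum_sub_distrib]
      refine (norm_sum_le _ _).trans ?_
      have hn : n * (4 * P * K + 4 * W * K') * ‖Y t a - Y t b‖
          = ∑ _j : Fin n, (4 * P * K + 4 * W * K') * ‖Y t a - Y t b‖ := by
        simp [mul_assoc]
      rw [hn]
      refine Finset.sum_le_sum fun j _ => ?_
      by_cases hja : j = a
      · subst hja
        have := hest t ht' (p b j) (hPle _ _) 0 (Y t b - Y t j) hR0 (hR t ht' _ _)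
        simpa using this
      by_cases hjb : j = b
      · subst hjb
        have := hest t ht' (p a j) (hPle _ _) (Y t a - Y t j) 0 (hR t ht' _ _) hR0
        simpa using this
      have := hest t ht' (p a j) (hPle _ _) (Y t a - Y t j) (Y t b - Y t j)
        (hR t ht' _ _) (hR t ht' _ _)
      rw [sub_sub_sub_cancel_right] at this
      rw [← hp j hja hjb]
      exact this
  exact sub_eq_zero.1 (hzero T ⟨hT, le_rfl⟩)

end Helpers

/-- **Theorem 1.5.** Under assumptions (A1) and (A2) on `γ = 1/β`, if `p_{1j} = p_{2j}` for
all `j > 2` and the first two points initially coincide, then `diam Y(t)` stays bounded. -/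
theorem doubled_point_diameter_bound
    (s n : ℕ) (hs : 1 ≤ s) (hn : s + 1 < n)
    (p : Fin n → Fin n → ℝ)
    (hsymm : ∀ i j, p i j = p j i)
    (hppos : ∀ i j, i ≠ j → 0 < p i j)
    (hpsum : (∑ i, ∑ j, if i ≠ j then p i j else (0 : ℝ)) = 1)
    (β : ℝ → ℝ)
    (hβpos : ∀ x, 0 ≤ x → 0 < β x)
    (hβsmooth : ContDiffOn ℝ (⊤ : ℕ∞) β (Set.Ici 0))
    (hβanti : AntitoneOn β (Set.Ici 0))
    (hβbdd : ∃ M : ℝ, ∀ x, 0 ≤ x → |lbd β x| ≤ M)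
    -- (A1): `γ = 1/β` is convex on `[0,∞)`, `γ(0) = 1`, `γ' ≥ 0`, and `γ(x) → ∞`.
    (hγconv : ConvexOn ℝ (Set.Ici 0) fun x => (β x)⁻¹)
    (hγ0 : (β 0)⁻¹ = 1)
    (hγder : ∀ x, 0 ≤ x → 0 ≤ derivWithin (fun y => (β y)⁻¹) (Set.Ici 0) x)
    (hγtop : Tendsto (fun x => (β x)⁻¹) atTop atTop)
    -- (A2): `sup_{x ≥ 0} (log γ)'(x) < ∞`.
    (hA2 : ∃ M : ℝ, ∀ x, 0 ≤ x →
      derivWithin (fun y => Real.log ((β y)⁻¹)) (Set.Ici 0) x ≤ M)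
    (Y : ℝ → Fin n → EuclideanSpace ℝ (Fin s))
    (hflow : IsGradFlow β p Y)
    -- `p_{1j} = p_{2j}` for all `j > 2` (indices `0`, `1` in 0-based numbering)
    (hp12 : ∀ j : Fin n, 1 < (j : ℕ) → p ⟨0, by omega⟩ j = p ⟨1, by omega⟩ j)
    -- `y_1 = y_2` initially
    (hinit : Y 0 ⟨0, by omega⟩ = Y 0 ⟨1, by omega⟩) :
    ∃ C : ℝ, 0 < C ∧ ∀ t : ℝ, 0 ≤ t → diamY (Y t) ≤ C := by
  have hab : (⟨0, by omega⟩ : Fin n) ≠ ⟨1, by omega⟩ := by simp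
  have hZ : ∀ t, 0 < pairZ β (Y t) := fun t =>
    lt_of_lt_of_le (hβpos _ (by positivity)) (aux_pairZ_ge β hβpos (Y t) _ _ hab)
  have hco := aux_coincide β hβpos hβsmooth p Y hflow hZ ⟨0, by omega⟩ ⟨1, by omega⟩
    (fun j hj0 hj1 => hp12 j (by
      have h0 : (j : ℕ) ≠ 0 := fun h => hj0 (Fin.ext h)
      have h1 : (j : ℕ) ≠ 1 := fun h => hj1 (Fin.ext h)
      omega)) hinit
  have hβ0 : β 0 = 1 := inv_eq_one.1 hγ0
  have hZ1 : ∀ t, 0 ≤ t → 1 ≤ pairZ β (Y t) := by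
    intro t ht
    have := aux_pairZ_ge β hβpos (Y t) _ _ hab
    rw [hco t ht] at this
    simpa [hβ0] using this
  have hen := aux_energy β hβpos hβsmooth p hsymm Y hflow hZ
  set H : ℝ → ℝ := fun u => Real.log (pairZ β (Y u))
      - ∑ i, ∑ j, p i j * Real.log (β (‖Y u i - Y u j‖ ^ 2)) with hH
  have hlog : ∀ x, 0 ≤ x → Real.log (β x) ≤ 0 := by
    intro x hx
    refine Real.log_nonpos (hβpos x hx).le ?_
    rw [← hβ0]
    exact hβanti Set.self_mem_Ici hx hx
  have hterm : ∀ t i j, 0 ≤ -(p i j * Real.log (β (‖Y t i - Y t j‖ ^ 2))) := by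
    intro t i j
    by_cases hij : i = j
    · subst hij; simp [hβ0]
    · have := mul_nonneg (hppos i j hij).le
        (neg_nonneg.2 (hlog (‖Y t i - Y t j‖ ^ 2) (by positivity)))
      linarith
  have hb : ∀ t, 0 ≤ t → ∀ i j, -(p i j * Real.log (β (‖Y t i - Y t j‖ ^ 2))) ≤ H 0 := by
    intro t ht i j
    have h1 : H t ≤ H 0 := hen Set.self_mem_Ici ht ht
    have h2 : 0 ≤ Real.log (pairZ β (Y t)) := Real.log_nonneg (hZ1 t ht)
    have h3 : -(p i j * Real.log (β (‖Y t i - Y t j‖ ^ 2))) ≤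
        ∑ i, ∑ j, -(p i j * Real.log (β (‖Y t i - Y t j‖ ^ 2))) :=
      (Finset.single_le_sum (f := fun j => -(p i j * Real.log (β (‖Y t i - Y t j‖ ^ 2))))
        (fun j _ => hterm t i j) (Finset.mem_univ j)).trans
      (Finset.single_le_sum
        (f := fun i => ∑ j, -(p i j * Real.log (β (‖Y t i - Y t j‖ ^ 2))))
        (fun i _ => Finset.sum_nonneg fun j _ => hterm t i j) (Finset.mem_univ i))
    simp only [Finset.sum_neg_distrib] at h3
    simp only [hH] at h1 ⊢
    linarith
  have hX : ∀ i j : Fin n, ∃ X : ℝ, ∀ x, X ≤ x → Real.exp (H 0 / p i j) < (β x)⁻¹ := by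
    intro i j
    exact eventually_atTop.1 (hγtop.eventually_gt_atTop _)
  choose X hX using hX
  have hXs : ∀ i j, |X i j| ≤ ∑ i, ∑ j, |X i j| := fun i j =>
    (Finset.single_le_sum (f := fun j => |X i j|)
      (fun _ _ => abs_nonneg _) (Finset.mem_univ j)).trans
      (Finset.single_le_sum (f := fun i => ∑ j, |X i j|)
      (fun _ _ => Finset.sum_nonneg fun _ _ => abs_nonneg _) (Finset.mem_univ i))
  have hS : 0 ≤ ∑ i, ∑ j, |X i j| :=
    Finset.sum_nonneg fun _ _ => Finset.sum_nonneg fun _ _ => abs_nonneg _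
  refine ⟨(∑ i, ∑ j, |X i j|) + 1, by linarith, fun t ht => ?_⟩
  refine Metric.diam_le_of_forall_dist_le (by linarith) ?_
  rintro _ ⟨i, rfl⟩ _ ⟨j, rfl⟩
  rw [dist_eq_norm]
  by_cases hij : i = j
  · subst hij; simp; linarith
  have hpp := hppos i j hij
  have hlt : ‖Y t i - Y t j‖ ^ 2 < X i j := by
    by_contra hcon
    have h1 := hX i j _ (not_lt.1 hcon)
    have h2 := hb t ht i j
    have h3 := Real.log_lt_log (Real.exp_pos _) h1
    rw [Real.log_exp, Real.log_inv, div_lt_iff₀ hpp] at h3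
    linarith
  have h4 := hXs i j
  have h5 := le_abs_self (X i j)
  nlinarith [sq_nonneg (‖Y t i - Y t j‖ - 1)]
end

section
/- Assume (A1) and (A2). Let Y(t) be a solution of the gradient flow of the relative entropy with center of mass at the origin, i.e. Σ_{i=1}^n y_i(t) = 0 for all t, and set S(t) = Σ_{i=1}^n |y_i(t)|². Then there exist constants C > 0 and c > 0 (depending on n, s, Y(0), the p_{ij} and β, but not on t) such that for every t ≥ 0 with S(t) ≥ C one has |y_i(t) − y_j(t)|² ≥ c S(t) for all i ≠ j. -/
open Filter Topology

theorem sum_sym_aux {E : Type*} [NormedAddCommGroup E] [InnerProductSpace ℝ E] {n : ℕ}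
    (a : Fin n → Fin n → ℝ) (ha : ∀ i j, a i j = a j i) (y v : Fin n → E) :
    ∑ i, ∑ j, a i j * inner ℝ (y i - y j) (v i - v j)
      = 2 * ∑ i, inner ℝ (∑ j, a i j • (y i - y j)) (v i) := by
  have h1 : ∀ i, inner ℝ (∑ j, a i j • (y i - y j)) (v i)
      = ∑ j, a i j * inner ℝ (y i - y j) (v i) := by
    intro i
    rw [sum_inner]
    exact Finset.sum_congr rfl fun j _ => by rw [real_inner_smul_left]
  simp_rw [h1]
  have h2 : ∑ i, ∑ j, a i j * inner ℝ (y i - y j) (v j)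
      = - ∑ i, ∑ j, a i j * inner ℝ (y i - y j) (v i) := by
    rw [Finset.sum_comm, ← Finset.sum_neg_distrib]
    refine Finset.sum_congr rfl fun i _ => ?_
    rw [← Finset.sum_neg_distrib]
    refine Finset.sum_congr rfl fun j _ => ?_
    rw [ha j i, ← neg_sub (y i) (y j), inner_neg_left]
    ring
  simp_rw [inner_sub_right, mul_sub, Finset.sum_sub_distrib, h2]
  ring

theorem sum_sq_aux {E : Type*} [NormedAddCommGroup E] [InnerProductSpace ℝ E] {n : ℕ}
    (y : Fin n → E) (h0 : ∑ i, y i = 0) :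
    ∑ i, ∑ j, ‖y i - y j‖ ^ 2 = 2 * n * ∑ i, ‖y i‖ ^ 2 := by
  have h : ∀ i j, ‖y i - y j‖ ^ 2 = ‖y i‖ ^ 2 - 2 * inner ℝ (y i) (y j) + ‖y j‖ ^ 2 :=
    fun i j => norm_sub_sq_real _ _
  simp_rw [h, Finset.sum_add_distrib, Finset.sum_sub_distrib, ← Finset.mul_sum, ← inner_sum, h0]
  simp [← Finset.mul_sum]
  ring

/-- The relative entropy up to an additive constant. -/
noncomputable def entF {E : Type*} [NormedAddCommGroup E] (β : ℝ → ℝ) {n : ℕ}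
    (p : Fin n → Fin n → ℝ) (Y : Fin n → E) : ℝ :=
  (∑ i, ∑ j, if i ≠ j then - (p i j * Real.log (β (‖Y i - Y j‖ ^ 2))) else 0)
    + Real.log (pairZ β Y)

theorem le_pairZ_aux {E : Type*} [NormedAddCommGroup E] (β : ℝ → ℝ) {n : ℕ}
    (hβpos : ∀ x, 0 ≤ x → 0 < β x) (Y : Fin n → E) (i j : Fin n) (hij : i ≠ j) :
    β (‖Y i - Y j‖ ^ 2) ≤ pairZ β Y := by
  unfold pairZ
  have hnn : ∀ k l : Fin n, 0 ≤ (if k ≠ l then β (‖Y k - Y l‖ ^ 2) else 0) := by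
    intro k l
    split_ifs
    · exact (hβpos _ (by positivity)).le
    · exact le_rfl
  calc β (‖Y i - Y j‖ ^ 2) = (if i ≠ j then β (‖Y i - Y j‖ ^ 2) else 0) := by rw [if_pos hij]
    _ ≤ ∑ l, (if i ≠ l then β (‖Y i - Y l‖ ^ 2) else 0) :=
      Finset.single_le_sum (f := fun l => if i ≠ l then β (‖Y i - Y l‖ ^ 2) else 0)
        (fun l _ => hnn i l) (Finset.mem_univ j)
    _ ≤ _ := Finset.single_le_sum
        (f := fun k => ∑ l, (if k ≠ l then β (‖Y k - Y l‖ ^ 2) else 0))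
        (fun k _ => Finset.sum_nonneg fun l _ => hnn k l) (Finset.mem_univ i)

theorem entF_anti {E : Type*} [NormedAddCommGroup E] [InnerProductSpace ℝ E] {n : ℕ}
    (hn : 2 ≤ n) (p : Fin n → Fin n → ℝ) (hsymm : ∀ i j, p i j = p j i) (β : ℝ → ℝ)
    (hβpos : ∀ x, 0 ≤ x → 0 < β x) (hβd : DifferentiableOn ℝ β (Set.Ici 0))
    (Y : ℝ → Fin n → E) (hflow : IsGradFlow β p Y) :
    AntitoneOn (fun t => entF β p (Y t)) (Set.Ici 0) := by
  have hZ : ∀ t, 0 < pairZ β (Y t) := fun t =>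
    (hβpos _ (by positivity)).trans_le
      (le_pairZ_aux β hβpos (Y t) ⟨0, by omega⟩ ⟨1, by omega⟩ (by simp))
  set a : ℝ → Fin n → Fin n → ℝ := fun t i j =>
    if i ≠ j then 4 * (p i j - qfun β (Y t) i j) * lbd β (‖Y t i - Y t j‖ ^ 2) else 0 with ha
  set v : ℝ → Fin n → E := fun t i => ∑ j, a t i j • (Y t i - Y t j) with hv
  have hY : ∀ i, ∀ t ∈ Set.Ici (0 : ℝ),
      HasDerivWithinAt (fun u => Y u i) (v t i) (Set.Ici 0) t := by
    intro i t ht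
    convert hflow i t ht using 1
    simp only [hv, ha]
    rw [Finset.sum_filter]
    refine Finset.sum_congr rfl fun j _ => ?_
    by_cases h : i = j
    · simp [h]
    · rw [if_pos h, if_pos (Ne.symm h)]
  have hasym : ∀ t i j, a t i j = a t j i := by
    intro t i j
    simp only [ha, qfun]
    rw [hsymm i j, norm_sub_rev (Y t i)]
    by_cases h : i = j
    · simp [h]
    · rw [if_pos h, if_pos (Ne.symm h)]
  have hβ' : ∀ x ∈ Set.Ici (0 : ℝ), HasDerivWithinAt β (β x * lbd β x) (Set.Ici 0) x := by
    intro x hx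
    have h1 := (hβd x hx).hasDerivWithinAt
    have h2 := (h1.log (hβpos x hx).ne').derivWithin (uniqueDiffOn_Ici 0 x hx)
    unfold lbd
    rw [h2, mul_div_cancel₀ _ (hβpos x hx).ne']
    exact h1
  have hd : ∀ i j, ∀ t ∈ Set.Ici (0 : ℝ), HasDerivWithinAt (fun u => ‖Y u i - Y u j‖ ^ 2)
      (2 * inner ℝ (Y t i - Y t j) (v t i - v t j)) (Set.Ici 0) t :=
    fun i j t ht => ((hY i t ht).sub (hY j t ht)).norm_sq
  have hb : ∀ i j, ∀ t ∈ Set.Ici (0 : ℝ), HasDerivWithinAt (fun u => β (‖Y u i - Y u j‖ ^ 2))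
      (β (‖Y t i - Y t j‖ ^ 2) * lbd β (‖Y t i - Y t j‖ ^ 2) *
        (2 * inner ℝ (Y t i - Y t j) (v t i - v t j))) (Set.Ici 0) t := by
    intro i j t ht
    exact (hβ' (‖Y t i - Y t j‖ ^ 2) (by simp)).comp t (hd i j t ht)
      (fun u _ => by simp)
  have hF : ∀ t ∈ Set.Ici (0 : ℝ), HasDerivWithinAt (fun t => entF β p (Y t))
      (- ∑ i, ‖v t i‖ ^ 2) (Set.Ici 0) t := by
    intro t ht
    have e1 : HasDerivWithinAt (fun u => ∑ i, ∑ j, if i ≠ j then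
          - (p i j * Real.log (β (‖Y u i - Y u j‖ ^ 2))) else 0)
        (∑ i, ∑ j, if i ≠ j then - (p i j * (lbd β (‖Y t i - Y t j‖ ^ 2) *
          (2 * inner ℝ (Y t i - Y t j) (v t i - v t j)))) else 0) (Set.Ici 0) t := by
      refine HasDerivWithinAt.fun_sum fun i _ => HasDerivWithinAt.fun_sum fun j _ => ?_
      by_cases h : i = j
      · simp only [h, ne_eq, not_true_eq_false, if_false]
        exact hasDerivWithinAt_const _ _ _
      · simp only [ne_eq, h, not_false_eq_true, if_true]
        have hp := hβpos (‖Y t i - Y t j‖ ^ 2) (by positivity)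
        have := (((hb i j t ht).log hp.ne').const_mul (p i j)).neg
        refine this.congr_deriv ?_
        field_simp
    have e2 : HasDerivWithinAt (fun u => pairZ β (Y u))
        (∑ i, ∑ j, if i ≠ j then (β (‖Y t i - Y t j‖ ^ 2) * lbd β (‖Y t i - Y t j‖ ^ 2) *
          (2 * inner ℝ (Y t i - Y t j) (v t i - v t j))) else 0) (Set.Ici 0) t := by
      unfold pairZ
      refine HasDerivWithinAt.fun_sum fun i _ => HasDerivWithinAt.fun_sum fun j _ => ?_
      by_cases h : i = j
      · simp only [h, ne_eq, not_true_eq_false, if_false]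
        exact hasDerivWithinAt_const _ _ _
      · simp only [ne_eq, h, not_false_eq_true, if_true]
        exact hb i j t ht
    have e3 := e1.add (e2.log (hZ t).ne')
    have key := sum_sym_aux (a t) (hasym t) (Y t) (v t)
    have hvv : ∑ i, inner ℝ (∑ j, a t i j • (Y t i - Y t j)) (v t i) = ∑ i, ‖v t i‖ ^ 2 :=
      Finset.sum_congr rfl fun i _ => real_inner_self_eq_norm_sq (v t i)
    rw [hvv] at key
    refine HasDerivWithinAt.congr_deriv e3 (Eq.symm ?_)
    have : - ∑ i, ‖v t i‖ ^ 2 = -(1/2) * ∑ i, ∑ j, a t i j *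
        inner ℝ (Y t i - Y t j) (v t i - v t j) := by
      rw [key]; ring
    rw [this, Finset.mul_sum, Finset.sum_div, ← Finset.sum_add_distrib]
    refine Finset.sum_congr rfl fun i _ => ?_
    rw [Finset.mul_sum, Finset.sum_div, ← Finset.sum_add_distrib]
    refine Finset.sum_congr rfl fun j _ => ?_
    by_cases h : i = j
    · simp [h, ha]
    · simp only [ha, ne_eq, h, not_false_eq_true, if_true, qfun]
      ring
  refine antitoneOn_of_hasDerivWithinAt_nonpos (f' := fun t => - ∑ i, ‖v t i‖ ^ 2)
    (convex_Ici 0) (fun t ht => (hF t ht).continuousWithinAt) ?_ ?_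
  · intro t ht
    exact (hF t (interior_subset ht)).mono interior_subset
  · intro t _
    have : 0 ≤ ∑ i, ‖v t i‖ ^ 2 := Finset.sum_nonneg fun i _ => by positivity
    linarith

theorem ratio_aux {E : Type*} [NormedAddCommGroup E] {n : ℕ}
    (p : Fin n → Fin n → ℝ) (hppos : ∀ i j, i ≠ j → 0 < p i j)
    (hpsum : (∑ i, ∑ j, if i ≠ j then p i j else (0 : ℝ)) = 1) (β : ℝ → ℝ)
    (hβpos : ∀ x, 0 ≤ x → 0 < β x) (F0 : ℝ) :
    ∃ K : ℝ, 0 ≤ K ∧ ∀ y : Fin n → E, entF β p y ≤ F0 → ∀ i j k l : Fin n, i ≠ j → k ≠ l →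
      β (‖y k - y l‖ ^ 2) ≤ Real.exp K * β (‖y i - y j‖ ^ 2) := by
  have hnn : ∀ i j, 0 ≤ (if i ≠ j then |F0| / p i j else 0) := by
    intro i j
    split_ifs with h
    · have := hppos i j h
      positivity
    · exact le_rfl
  refine ⟨∑ i, ∑ j, if i ≠ j then |F0| / p i j else 0,
    Finset.sum_nonneg fun i _ => Finset.sum_nonneg fun j _ => hnn i j, ?_⟩
  intro y hy i j k l hij hkl
  set K := ∑ i, ∑ j, if i ≠ j then |F0| / p i j else 0 with hK
  have hpk := hβpos (‖y k - y l‖ ^ 2) (by positivity)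
  have hpi := hβpos (‖y i - y j‖ ^ 2) (by positivity)
  have hKij : |F0| / p i j ≤ K := by
    calc |F0| / p i j = (if i ≠ j then |F0| / p i j else 0) := by rw [if_pos hij]
      _ ≤ ∑ l, (if i ≠ l then |F0| / p i l else 0) :=
        Finset.single_le_sum (f := fun l => if i ≠ l then |F0| / p i l else 0)
          (fun l _ => hnn i l) (Finset.mem_univ j)
      _ ≤ _ := Finset.single_le_sum
          (f := fun k => ∑ l, (if k ≠ l then |F0| / p k l else 0))
          (fun k _ => Finset.sum_nonneg fun l _ => hnn k l) (Finset.mem_univ i)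
  obtain ⟨Z, hZ⟩ : ∃ Z, Z = pairZ β y := ⟨_, rfl⟩
  have hlog : ∀ i j, i ≠ j → Real.log (β (‖y i - y j‖ ^ 2)) ≤ Real.log Z := fun i j h =>
    Real.log_le_log (hβpos _ (by positivity)) (hZ ▸ le_pairZ_aux β hβpos y i j h)
  have hF : entF β p y = ∑ i, ∑ j, if i ≠ j then
      p i j * (Real.log Z - Real.log (β (‖y i - y j‖ ^ 2))) else 0 := by
    have h1 : Real.log (pairZ β y) =
        (∑ i, ∑ j, if i ≠ j then p i j else (0 : ℝ)) * Real.log Z := by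
      rw [hpsum, one_mul, hZ]
    unfold entF
    rw [h1, Finset.sum_mul, ← Finset.sum_add_distrib]
    refine Finset.sum_congr rfl fun i _ => ?_
    rw [Finset.sum_mul, ← Finset.sum_add_distrib]
    refine Finset.sum_congr rfl fun j _ => ?_
    split_ifs
    · ring
    · ring
  have hnn2 : ∀ i j, 0 ≤ (if i ≠ j then
      p i j * (Real.log Z - Real.log (β (‖y i - y j‖ ^ 2))) else 0) := by
    intro i j
    split_ifs with h
    · exact mul_nonneg (hppos i j h).le (sub_nonneg.2 (hlog i j h))
    · exact le_rfl
  have hone : p i j * (Real.log Z - Real.log (β (‖y i - y j‖ ^ 2))) ≤ F0 := by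
    refine le_trans ?_ (hF ▸ hy)
    calc _ = (if i ≠ j then
        p i j * (Real.log Z - Real.log (β (‖y i - y j‖ ^ 2))) else 0) := by rw [if_pos hij]
      _ ≤ ∑ l, (if i ≠ l then p i l * (Real.log Z - Real.log (β (‖y i - y l‖ ^ 2))) else 0) :=
        Finset.single_le_sum
          (f := fun l => if i ≠ l then
            p i l * (Real.log Z - Real.log (β (‖y i - y l‖ ^ 2))) else 0)
          (fun l _ => hnn2 i l) (Finset.mem_univ j)
      _ ≤ _ := Finset.single_le_sum
          (f := fun k => ∑ l, (if k ≠ l then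
            p k l * (Real.log Z - Real.log (β (‖y k - y l‖ ^ 2))) else 0))
          (fun k _ => Finset.sum_nonneg fun l _ => hnn2 k l) (Finset.mem_univ i)
  have hdiff : Real.log Z - Real.log (β (‖y i - y j‖ ^ 2)) ≤ K := by
    refine le_trans ?_ hKij
    rw [le_div_iff₀ (hppos i j hij), mul_comm]
    exact hone.trans (le_abs_self _)
  have h3 := hlog k l hkl
  rw [← Real.exp_log hpk, ← Real.exp_log hpi, ← Real.exp_add]
  exact Real.exp_le_exp.2 (by linarith)

theorem conv_aux (f : ℝ → ℝ) (hf : ConvexOn ℝ (Set.Ici 0) f) (D d : ℝ) (hD : 0 < D)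
    (hd : 0 ≤ d) (h : d ≤ D) : f d ≤ d / D * f D + (1 - d / D) * f 0 := by
  have hlam1 : d / D ≤ 1 := (div_le_one hD).2 h
  have hlam0 : 0 ≤ d / D := by positivity
  have hc := hf.2 (Set.mem_Ici.2 hD.le) (Set.mem_Ici.2 (le_refl (0 : ℝ))) hlam0
    (sub_nonneg.2 hlam1) (by ring)
  simp only [smul_eq_mul, mul_zero, add_zero] at hc
  rwa [div_mul_cancel₀ _ hD.ne'] at hc

/-- **Proposition 3.1.** Under assumptions (A1) and (A2) on `γ = 1/β`, for a solution `Y(t)`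
of the gradient flow with center of mass at the origin and `S(t) = Σ_i |y_i(t)|²`, there are
constants `C, c > 0` such that whenever `S(t) ≥ C` one has `|y_i(t) - y_j(t)|² ≥ c S(t)` for
all `i ≠ j`. -/
theorem separation_proposition
    (s n : ℕ) (hs : 1 ≤ s) (hn : s + 1 < n)
    (p : Fin n → Fin n → ℝ)
    (hsymm : ∀ i j, p i j = p j i)
    (hppos : ∀ i j, i ≠ j → 0 < p i j)
    (hpsum : (∑ i, ∑ j, if i ≠ j then p i j else (0 : ℝ)) = 1)
    (β : ℝ → ℝ)
    (hβpos : ∀ x, 0 ≤ x → 0 < β x)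
    (hβsmooth : ContDiffOn ℝ (⊤ : ℕ∞) β (Set.Ici 0))
    (hβanti : AntitoneOn β (Set.Ici 0))
    (hβbdd : ∃ M : ℝ, ∀ x, 0 ≤ x → |lbd β x| ≤ M)
    -- (A1): `γ = 1/β` is convex on `[0,∞)`, `γ(0) = 1`, `γ' ≥ 0`, and `γ(x) → ∞`.
    (hγconv : ConvexOn ℝ (Set.Ici 0) fun x => (β x)⁻¹)
    (hγ0 : (β 0)⁻¹ = 1)
    (hγder : ∀ x, 0 ≤ x → 0 ≤ derivWithin (fun y => (β y)⁻¹) (Set.Ici 0) x)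
    (hγtop : Tendsto (fun x => (β x)⁻¹) atTop atTop)
    -- (A2): `sup_{x ≥ 0} (log γ)'(x) < ∞`.
    (hA2 : ∃ M : ℝ, ∀ x, 0 ≤ x →
      derivWithin (fun y => Real.log ((β y)⁻¹)) (Set.Ici 0) x ≤ M)
    (Y : ℝ → Fin n → EuclideanSpace ℝ (Fin s))
    (hflow : IsGradFlow β p Y)
    (hcm : ∀ t : ℝ, 0 ≤ t → ∑ i, Y t i = 0) :
    ∃ C c : ℝ, 0 < C ∧ 0 < c ∧
      ∀ t : ℝ, 0 ≤ t → C ≤ ∑ i, ‖Y t i‖ ^ 2 →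
        ∀ i j : Fin n, i ≠ j → c * (∑ k, ‖Y t k‖ ^ 2) ≤ ‖Y t i - Y t j‖ ^ 2 := by
  obtain ⟨K, hK0, hK⟩ := ratio_aux (E := EuclideanSpace ℝ (Fin s)) p hppos hpsum β hβpos
    (entF β p (Y 0))
  have hanti := entF_anti (by omega) p hsymm β hβpos (hβsmooth.differentiableOn (by simp)) Y hflow
  obtain ⟨X, hX⟩ := Filter.eventually_atTop.1 (hγtop.eventually_ge_atTop (2 * Real.exp K))
  have hn0 : (0 : ℝ) < n := by
    have : 0 < n := by omega
    exact_mod_cast this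
  have heK : 0 < Real.exp K := Real.exp_pos K
  have heK1 : 1 ≤ Real.exp K := Real.one_le_exp hK0
  refine ⟨max (n * X) 1, 1 / (2 * n * Real.exp K), by positivity, by positivity, ?_⟩
  intro t ht hS k l hkl
  set S := ∑ i, ‖Y t i‖ ^ 2 with hSdef
  have hS1 : 1 ≤ S := (le_max_right _ _).trans hS
  have hSX : n * X ≤ S := (le_max_left _ _).trans hS
  have hent : entF β p (Y t) ≤ entF β p (Y 0) :=
    hanti (Set.mem_Ici.2 le_rfl) (Set.mem_Ici.2 ht) ht
  have hsq := sum_sq_aux (Y t) (hcm t ht)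
  obtain ⟨i, j, hij⟩ : ∃ i j, S / n ≤ ‖Y t i - Y t j‖ ^ 2 := by
    by_contra! hcon
    have : ∑ i, ∑ j, ‖Y t i - Y t j‖ ^ 2 ≤ ∑ i : Fin n, ∑ j : Fin n, S / n :=
      Finset.sum_le_sum fun i _ => Finset.sum_le_sum fun j _ => (hcon i j).le
    rw [hsq] at this
    simp only [Finset.sum_const, Finset.card_univ, Fintype.card_fin, nsmul_eq_mul] at this
    rw [mul_div_cancel₀ _ hn0.ne'] at this
    nlinarith
  have hSn : 0 < S / n := div_pos (by linarith) hn0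
  have hne : i ≠ j := by
    rintro rfl
    simp at hij
    linarith
  set D := ‖Y t i - Y t j‖ ^ 2 with hD
  set d := ‖Y t k - Y t l‖ ^ 2 with hd
  have hD0 : 0 < D := hSn.trans_le hij
  have hd0 : 0 ≤ d := by positivity
  have hXD : X ≤ D := by
    refine le_trans ?_ hij
    rw [le_div_iff₀ hn0]
    linarith
  have hγD := hX D hXD
  have hrat := hK (Y t) hent i j k l hne hkl
  rw [← hD, ← hd] at hrat
  have hbD := hβpos D hD0.le
  have hbd := hβpos d hd0
  -- `γ(D) ≤ e^K γ(d)`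
  have hrat2 : (β D)⁻¹ ≤ Real.exp K * (β d)⁻¹ := by
    rw [← div_eq_mul_inv, le_div_iff₀ hbd, inv_mul_le_iff₀ hbD, mul_comm]
    exact hrat
  have goal2 : D / (2 * Real.exp K) ≤ d := by
    rcases le_or_gt D d with h | h
    · refine le_trans ?_ h
      rw [div_le_iff₀ (by positivity)]
      nlinarith
    · have hlam1 : d / D ≤ 1 := (div_le_one hD0).2 h.le
      have hlam0 : 0 ≤ d / D := by positivity
      have hc := conv_aux _ hγconv D d hD0 hd0 h.le
      simp only [hγ0] at hc
      have hg : 0 < (β D)⁻¹ := inv_pos.2 hbD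
      set g := (β D)⁻¹ with hgdef
      set m := d / D with hm
      have h1 : g ≤ Real.exp K * (m * g + 1) := by
        refine hrat2.trans (mul_le_mul_of_nonneg_left ?_ heK.le)
        linarith
      have h2 : 1 ≤ 2 * Real.exp K * m := by
        by_contra! hcon
        nlinarith
      have h3 : d = m * D := by rw [hm, div_mul_cancel₀ _ hD0.ne']
      rw [div_le_iff₀ (by positivity), h3]
      nlinarith
  refine le_trans ?_ goal2
  calc 1 / (2 * n * Real.exp K) * S = (S / n) / (2 * Real.exp K) := by field_simp
    _ ≤ D / (2 * Real.exp K) := by gcongr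
end

section
/- For each index m, the gradient of the relative entropy C(Y) = Σ_{i≠j} p_{ij} log(p_{ij}/q_{ij}(Y)) with respect to the point y_m ∈ ℝ^s is given by ∇_{y_m} C(Y) = −4 Σ_{j ≠ m} (p_{mj} − q_{mj}(Y)) (y_m − y_j) (log β)'(|y_m − y_j|²). Equivalently, the gradient flow of C is the system dy_i/dt = 4 Σ_{j≠i} (p_{ij} − q_{ij}(Y)) (y_i − y_j) (log β)'(|y_i − y_j|²). -/
open Filter Topology

/-- The relative entropy (Kullback–Leibler divergence)
`C(Y) = Σ_{i ≠ j} p_{ij} log(p_{ij} / q_{ij}(Y))`. -/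
noncomputable def relEntropy {E : Type*} [NormedAddCommGroup E] (β : ℝ → ℝ) {n : ℕ}
    (p : Fin n → Fin n → ℝ) (Y : Fin n → E) : ℝ :=
  ∑ i, ∑ j, if i ≠ j then p i j * Real.log (p i j / qfun β Y i j) else 0


lemma aux_w {s n : ℕ} (Y : Fin n → EuclideanSpace ℝ (Fin s)) (m i j : Fin n) :
    HasFDerivAt (fun y => ‖Function.update Y m y i - Function.update Y m y j‖ ^ 2)
      (innerSL ℝ ((2 * ((if i = m then 1 else 0) - (if j = m then 1 else 0)) : ℝ) • (Y i - Y j)))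
      (Y m) := by
  have h1 : ∀ k : Fin n, HasFDerivAt (fun y => Function.update Y m y k)
      ((if k = m then (1 : ℝ) else 0) • ContinuousLinearMap.id ℝ (EuclideanSpace ℝ (Fin s)))
      (Y m) := by
    intro k
    by_cases h : k = m
    · subst h
      simp only [Function.update_self, if_true, one_smul]
      exact hasFDerivAt_id (𝕜 := ℝ) (Y k)
    · simp only [Function.update_of_ne h, h, if_false]
      refine (hasFDerivAt_const (𝕜 := ℝ) (Y k) (Y m)).congr_fderiv ?_
      ext v
      simp
  have h2 := ((h1 i).sub (h1 j)).norm_sq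
  refine h2.congr_fderiv ?_
  ext v
  simp only [Function.update_eq_self, Pi.sub_apply]
  simp [inner_smul_left, inner_smul_right]
  split_ifs <;> simp <;> ring

lemma aux_logb {s n : ℕ} (β : ℝ → ℝ) (hβpos : ∀ x, 0 ≤ x → 0 < β x)
    (hβsmooth : ContDiffOn ℝ (⊤ : ℕ∞) β (Set.Ici 0))
    (Y : Fin n → EuclideanSpace ℝ (Fin s)) (m i j : Fin n) :
    HasFDerivAt (fun y => Real.log (β (‖Function.update Y m y i - Function.update Y m y j‖ ^ 2)))
      (innerSL ℝ ((lbd β (‖Y i - Y j‖ ^ 2) *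
        (2 * ((if i = m then 1 else 0) - (if j = m then 1 else 0)) : ℝ)) • (Y i - Y j)))
      (Y m) := by
  have h0 : (0 : ℝ) ≤ ‖Y i - Y j‖ ^ 2 := by positivity
  have hd : DifferentiableWithinAt ℝ (fun y => Real.log (β y)) (Set.Ici 0) (‖Y i - Y j‖ ^ 2) :=
    ((hβsmooth.differentiableOn (by simp)) _ h0).log (hβpos _ h0).ne'
  have h1 : HasDerivWithinAt (fun y => Real.log (β y)) (lbd β (‖Y i - Y j‖ ^ 2)) (Set.Ici 0)
      (‖Function.update Y m (Y m) i - Function.update Y m (Y m) j‖ ^ 2) := by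
    rw [Function.update_eq_self]
    exact hd.hasDerivWithinAt
  have h2 := (h1.hasFDerivWithinAt.comp (Y m) (aux_w Y m i j).hasFDerivWithinAt
    (s := Set.univ) (fun y _ => by simp only [Set.mem_Ici]; positivity)).hasFDerivAt_of_univ
  refine h2.congr_fderiv ?_
  ext v
  simp [inner_smul_left]
  ring

lemma aux_b {s n : ℕ} (β : ℝ → ℝ) (hβpos : ∀ x, 0 ≤ x → 0 < β x)
    (hβsmooth : ContDiffOn ℝ (⊤ : ℕ∞) β (Set.Ici 0))
    (Y : Fin n → EuclideanSpace ℝ (Fin s)) (m i j : Fin n) :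
    HasFDerivAt (fun y => β (‖Function.update Y m y i - Function.update Y m y j‖ ^ 2))
      (β (‖Y i - Y j‖ ^ 2) • innerSL ℝ ((lbd β (‖Y i - Y j‖ ^ 2) *
        (2 * ((if i = m then 1 else 0) - (if j = m then 1 else 0)) : ℝ)) • (Y i - Y j)))
      (Y m) := by
  have h := (aux_logb β hβpos hβsmooth Y m i j).exp
  have e : ∀ y, Real.exp (Real.log
      (β (‖Function.update Y m y i - Function.update Y m y j‖ ^ 2))) =
      β (‖Function.update Y m y i - Function.update Y m y j‖ ^ 2) := fun y =>
    Real.exp_log (hβpos _ (by positivity))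
  simp only [e] at h
  simpa only [Function.update_eq_self] using h

lemma aux_Zpos {s n : ℕ} (hn : 1 < n) (β : ℝ → ℝ) (hβpos : ∀ x, 0 ≤ x → 0 < β x)
    (Y : Fin n → EuclideanSpace ℝ (Fin s)) : 0 < pairZ β Y := by
  have h0 : ∀ k l : Fin n, 0 ≤ (if k ≠ l then β (‖Y k - Y l‖ ^ 2) else 0) := by
    intro k l
    split_ifs
    · exact (hβpos _ (by positivity)).le
    · exact le_rfl
  unfold pairZ
  refine Finset.sum_pos' (fun k _ => Finset.sum_nonneg fun l _ => h0 k l)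
    ⟨⟨0, by omega⟩, Finset.mem_univ _, ?_⟩
  refine Finset.sum_pos' (fun l _ => h0 _ l) ⟨⟨1, hn⟩, Finset.mem_univ _, ?_⟩
  rw [if_pos (by simp)]
  exact hβpos _ (by positivity)

/-- **Section 2.** The gradient of the relative entropy with respect to the point `y_m` is
`∇_{y_m} C(Y) = -4 Σ_{j ≠ m} (p_{mj} - q_{mj}(Y)) (y_m - y_j) (log β)'(|y_m - y_j|²)`,
so the gradient flow of `C` is the system (1.3). -/
theorem gradient_of_relative_entropy
    (s n : ℕ) (hs : 1 ≤ s) (hn : s + 1 < n)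
    (p : Fin n → Fin n → ℝ)
    (hsymm : ∀ i j, p i j = p j i)
    (hppos : ∀ i j, i ≠ j → 0 < p i j)
    (hpsum : (∑ i, ∑ j, if i ≠ j then p i j else (0 : ℝ)) = 1)
    (β : ℝ → ℝ)
    (hβpos : ∀ x, 0 ≤ x → 0 < β x)
    (hβsmooth : ContDiffOn ℝ (⊤ : ℕ∞) β (Set.Ici 0))
    (hβanti : AntitoneOn β (Set.Ici 0))
    (hβbdd : ∃ M : ℝ, ∀ x, 0 ≤ x → |lbd β x| ≤ M)
    (Y : Fin n → EuclideanSpace ℝ (Fin s)) (m : Fin n) :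
    HasGradientAt (fun y => relEntropy β p (Function.update Y m y))
      (∑ j ∈ Finset.univ.filter (· ≠ m),
        (-4 * (p m j - qfun β Y m j) * lbd β (‖Y m - Y j‖ ^ 2)) • (Y m - Y j))
      (Y m) := by
  have hn1 : 1 < n := by omega
  have hZ : ∀ X : Fin n → EuclideanSpace ℝ (Fin s), 0 < pairZ β X := aux_Zpos hn1 β hβpos
  set V : Fin n → Fin n → EuclideanSpace ℝ (Fin s) := fun i j =>
    (lbd β (‖Y i - Y j‖ ^ 2) *
        (2 * ((if i = m then 1 else 0) - (if j = m then 1 else 0)) : ℝ)) • (Y i - Y j) with hV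
  have hl : ∀ i j, HasFDerivAt (fun y => Real.log
      (β (‖Function.update Y m y i - Function.update Y m y j‖ ^ 2))) (innerSL ℝ (V i j)) (Y m) :=
    fun i j => aux_logb β hβpos hβsmooth Y m i j
  have hb : ∀ i j, HasFDerivAt (fun y =>
      β (‖Function.update Y m y i - Function.update Y m y j‖ ^ 2))
      (β (‖Y i - Y j‖ ^ 2) • innerSL ℝ (V i j)) (Y m) :=
    fun i j => aux_b β hβpos hβsmooth Y m i j
  have hZd : HasFDerivAt (fun y => pairZ β (Function.update Y m y))
      (∑ i, ∑ j, if i ≠ j then β (‖Y i - Y j‖ ^ 2) • innerSL ℝ (V i j) else 0) (Y m) := by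
    unfold pairZ
    refine HasFDerivAt.fun_sum fun i _ => HasFDerivAt.fun_sum fun j _ => ?_
    by_cases h : i = j
    · simp only [h, ne_eq, not_true_eq_false, if_false]
      exact hasFDerivAt_const _ _
    · simp only [h, ne_eq, not_false_eq_true, if_true]
      exact hb i j
  have hlZ := hZd.log (hZ _).ne'
  rw [Function.update_eq_self] at hlZ
  have key : ∀ y, relEntropy β p (Function.update Y m y) =
      (∑ i, ∑ j, if i ≠ j then (p i j * Real.log (p i j) - p i j * Real.log
        (β (‖Function.update Y m y i - Function.update Y m y j‖ ^ 2))) else 0)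
      + Real.log (pairZ β (Function.update Y m y)) := by
    intro y
    conv_rhs => rw [← one_mul (Real.log (pairZ β (Function.update Y m y))), ← hpsum]
    unfold relEntropy
    simp only [Finset.sum_mul, ← Finset.sum_add_distrib]
    refine Finset.sum_congr rfl fun i _ => Finset.sum_congr rfl fun j _ => ?_
    by_cases h : i = j
    · simp [h]
    · simp only [h, ne_eq, not_false_eq_true, if_true]
      have hbp : 0 < β (‖Function.update Y m y i - Function.update Y m y j‖ ^ 2) :=
        hβpos _ (by positivity)
      unfold qfun
      rw [Real.log_div (hppos i j h).ne' (div_pos hbp (hZ _)).ne',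
        Real.log_div hbp.ne' (hZ _).ne']
      ring
  have hS : HasFDerivAt (fun y => ∑ i, ∑ j, if i ≠ j then
        (p i j * Real.log (p i j) - p i j * Real.log
        (β (‖Function.update Y m y i - Function.update Y m y j‖ ^ 2))) else 0)
      (∑ i, ∑ j, if i ≠ j then -(p i j • innerSL ℝ (V i j)) else 0) (Y m) := by
    refine HasFDerivAt.fun_sum fun i _ => HasFDerivAt.fun_sum fun j _ => ?_
    by_cases h : i = j
    · simp only [h, ne_eq, not_true_eq_false, if_false]
      exact hasFDerivAt_const _ _
    · simp only [h, ne_eq, not_false_eq_true, if_true]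
      exact ((hl i j).const_mul (p i j)).const_sub _
  have hT := hS.add hlZ
  rw [hasGradientAt_iff_hasFDerivAt]
  simp only [key]
  refine hT.congr_fderiv ?_
  have hqs : ∀ j, qfun β Y j m = qfun β Y m j := by
    intro j
    unfold qfun
    rw [norm_sub_rev]
  have hvec : (∑ i, ∑ j, if i ≠ j then (qfun β Y i j - p i j) • V i j else 0) =
      ∑ j ∈ Finset.univ.filter (· ≠ m),
        (-4 * (p m j - qfun β Y m j) * lbd β (‖Y m - Y j‖ ^ 2)) • (Y m - Y j) := by
    set g : Fin n → EuclideanSpace ℝ (Fin s) := fun j => if j ≠ m then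
      (-2 * (p m j - qfun β Y m j) * lbd β (‖Y m - Y j‖ ^ 2)) • (Y m - Y j) else 0 with hg
    have h1 : ∀ i j, (if i ≠ j then (qfun β Y i j - p i j) • V i j else 0) =
        (if i = m then g j else 0) + (if j = m then g i else 0) := by
      intro i j
      by_cases hi : i = m
      · subst hi
        by_cases hj : j = i
        · simp [hj, hg]
        · have hj' : i ≠ j := fun h => hj h.symm
          simp only [hg, hV, hj, hj', ne_eq, not_false_eq_true, if_true, if_false, add_zero,
            smul_smul]
          congr 1
          ring
      · by_cases hj : j = m
        · subst hj
          simp only [hg, hV, hi, ne_eq, not_false_eq_true, if_true, if_false, zero_add,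
            smul_smul]
          rw [← neg_sub (Y j) (Y i), norm_neg, smul_neg, ← neg_smul, hqs, hsymm i j]
          congr 1
          ring
        · simp [hi, hj, hV]
    simp only [h1, Finset.sum_add_distrib, Finset.sum_ite_eq', Finset.mem_univ, if_true]
    rw [Finset.sum_comm]
    simp only [Finset.sum_ite_eq', Finset.mem_univ, if_true]
    rw [← Finset.sum_add_distrib, Finset.sum_filter]
    refine Finset.sum_congr rfl fun j _ => ?_
    by_cases hj : j = m
    · simp [hg, hj]
    · simp only [hg, hj, ne_eq, not_false_eq_true, if_true, ← add_smul]
      congr 1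
      ring
  rw [← hvec]
  ext v
  simp only [ContinuousLinearMap.add_apply, ContinuousLinearMap.smul_apply,
    ContinuousLinearMap.sum_apply, InnerProductSpace.toDual_apply_apply, sum_inner, smul_eq_mul,
    Finset.mul_sum, ← Finset.sum_add_distrib]
  refine Finset.sum_congr rfl fun i _ => Finset.sum_congr rfl fun j _ => ?_
  by_cases h : i = j
  · simp [h]
  · simp only [h, ne_eq, not_false_eq_true, if_true, qfun, inner_smul_left]
    simp
    ring
end

section
/- Since sup_{x≥0} |(log β)'(x)| < ∞, for every initial configuration Y_0 = (y_1^0, …, y_n^0) in (ℝ^s)^n there exists a solution Y(t), defined for all t ≥ 0, of the gradient flow of the relative entropy with Y(0) = Y_0. -/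
open Filter Topology

/-- A `C¹` vector field with at most linear growth on a finite-dimensional space has global
integral curves. -/
lemma exists_global_of_linear_growth {V : Type*} [NormedAddCommGroup V] [NormedSpace ℝ V]
    [FiniteDimensional ℝ V] (F : V → V) (hF : ContDiff ℝ 1 F) (C : ℝ) (hC : 0 < C)
    (hb : ∀ x, ‖F x‖ ≤ C * ‖x‖) (x₀ : V) :
    ∃ γ : ℝ → V, γ 0 = x₀ ∧ ∀ t, HasDerivAt γ (F (γ t)) t := by
  have : CompleteSpace V := FiniteDimensional.complete ℝ V
  have hε : 0 < 1 / (2 * C) := by positivity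
  have key := exists_isMIntegralCurve_of_isMIntegralCurveOn (I := modelWithCornersSelf ℝ V)
    (M := V) (v := F) (contMDiff_vectorSpace_iff_contDiff.2 hF) hε ?_ x₀
  · obtain ⟨γ, h0, h⟩ := key
    refine ⟨γ, h0, fun t => ?_⟩
    have := (h t).hasFDerivAt
    rw [hasDerivAt_iff_hasFDerivAt]
    exact this
  · intro x
    have hcomp : IsCompact (Metric.closedBall x (‖x‖)) := isCompact_closedBall _ _
    obtain ⟨K, hK⟩ := (hF.locallyLipschitz.locallyLipschitzOn
      (s := Metric.closedBall x (‖x‖))).exists_lipschitzOnWith_of_compact hcomp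
    have hPL : IsPicardLindelof (fun _ => F) (tmin := -(1 / (2 * C))) (tmax := 1 / (2 * C))
        ⟨0, by constructor <;> linarith⟩ x ‖x‖₊ 0 (C.toNNReal * (2 * ‖x‖₊)) K := by
      apply IsPicardLindelof.of_time_independent
      · intro y hy
        refine (hb y).trans ?_
        have : ‖y‖ ≤ 2 * ‖x‖ := by
          have h1 : ‖y - x‖ ≤ ‖x‖ := by simpa [dist_eq_norm] using hy
          have := norm_le_norm_add_norm_sub' y x
          linarith
        push_cast
        rw [Real.coe_toNNReal C hC.le]
        exact mul_le_mul_of_nonneg_left this hC.le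
      · exact hK
      · push_cast
        simp only [sub_zero, zero_sub, neg_neg, max_self]
        rw [Real.coe_toNNReal C hC.le]
        apply le_of_eq
        field_simp
    obtain ⟨α, h0, h⟩ := hPL.exists_eq_forall_mem_Icc_hasDerivWithinAt₀
    refine ⟨α, h0, fun t ht => ?_⟩
    have := ((h t (Set.Ioo_subset_Icc_self ht)).mono Set.Ioo_subset_Icc_self).hasFDerivWithinAt
    exact this.hasMFDerivWithinAt

/-- **Section 1.2.** Since `(log β)'` is bounded, for every initial configuration `Y₀` there
exists a solution of the gradient flow of the relative entropy, defined for all `t ≥ 0`,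
starting at `Y₀`. -/
theorem global_existence_of_gradient_flow
    (s n : ℕ) (hs : 1 ≤ s) (hn : s + 1 < n)
    (p : Fin n → Fin n → ℝ)
    (hsymm : ∀ i j, p i j = p j i)
    (hppos : ∀ i j, i ≠ j → 0 < p i j)
    (hpsum : (∑ i, ∑ j, if i ≠ j then p i j else (0 : ℝ)) = 1)
    (β : ℝ → ℝ)
    (hβpos : ∀ x, 0 ≤ x → 0 < β x)
    (hβsmooth : ContDiffOn ℝ (⊤ : ℕ∞) β (Set.Ici 0))
    (hβanti : AntitoneOn β (Set.Ici 0))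
    (hβbdd : ∃ M : ℝ, ∀ x, 0 ≤ x → |lbd β x| ≤ M)
    (Y₀ : Fin n → EuclideanSpace ℝ (Fin s)) :
    ∃ Y : ℝ → Fin n → EuclideanSpace ℝ (Fin s),
      Y 0 = Y₀ ∧ IsGradFlow β p Y := by
  obtain ⟨M, hM⟩ := hβbdd
  have hM0 : 0 ≤ M := (abs_nonneg _).trans (hM 0 le_rfl)
  have hlbd : ContDiffOn ℝ 1 (lbd β) (Set.Ici 0) := by
    have hlog : ContDiffOn ℝ (⊤ : ℕ∞) (fun y => Real.log (β y)) (Set.Ici 0) :=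
      hβsmooth.log (fun x hx => (hβpos x hx).ne')
    have h2 : (1 : WithTop ℕ∞) + 1 ≤ ((⊤ : ℕ∞) : WithTop ℕ∞) := by
      have h3 : (1 : WithTop ℕ∞) + 1 = (((1 : ℕ∞) + 1 : ℕ∞) : WithTop ℕ∞) := rfl
      rw [h3]
      exact WithTop.coe_le_coe.2 le_top
    exact hlog.derivWithin (uniqueDiffOn_Ici 0) h2
  have hβ1 : ContDiffOn ℝ 1 β (Set.Ici 0) := hβsmooth.of_le (by exact_mod_cast le_top)
  -- composition with the squared distance
  have hcomp : ∀ g : ℝ → ℝ, ContDiffOn ℝ 1 g (Set.Ici 0) → ∀ i j : Fin n,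
      ContDiff ℝ 1 (fun Y : Fin n → EuclideanSpace ℝ (Fin s) => g (‖Y i - Y j‖ ^ 2)) := by
    intro g hg i j
    rw [← contDiffOn_univ]
    have h1 : ContDiff ℝ 1 (fun Y : Fin n → EuclideanSpace ℝ (Fin s) => ‖Y i - Y j‖ ^ 2) :=
      ((contDiff_apply ℝ _ i).sub (contDiff_apply ℝ _ j)).norm_sq ℝ
    exact hg.comp h1.contDiffOn (fun Y _ => by simp only [Set.mem_Ici]; positivity)
  have hnn : ∀ (Y : Fin n → EuclideanSpace ℝ (Fin s)) (k l : Fin n),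
      0 ≤ (if k ≠ l then β (‖Y k - Y l‖ ^ 2) else 0) := by
    intro Y k l
    split_ifs
    · exact (hβpos _ (by positivity)).le
    · exact le_rfl
  have hle : ∀ (Y : Fin n → EuclideanSpace ℝ (Fin s)) (i j : Fin n), i ≠ j →
      β (‖Y i - Y j‖ ^ 2) ≤ pairZ β Y := by
    intro Y i j hij
    unfold pairZ
    calc β (‖Y i - Y j‖ ^ 2) = if i ≠ j then β (‖Y i - Y j‖ ^ 2) else 0 := by rw [if_pos hij]
      _ ≤ ∑ l, if i ≠ l then β (‖Y i - Y l‖ ^ 2) else 0 :=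
          Finset.single_le_sum (f := fun l => if i ≠ l then β (‖Y i - Y l‖ ^ 2) else 0)
            (fun l _ => hnn Y i l) (Finset.mem_univ j)
      _ ≤ _ := Finset.single_le_sum
            (f := fun k => ∑ l, if k ≠ l then β (‖Y k - Y l‖ ^ 2) else 0)
            (fun k _ => Finset.sum_nonneg (fun l _ => hnn Y k l)) (Finset.mem_univ i)
  have hZpos : ∀ Y : Fin n → EuclideanSpace ℝ (Fin s), 0 < pairZ β Y := by
    intro Y
    have hij : (⟨0, by omega⟩ : Fin n) ≠ ⟨1, by omega⟩ := by simp
    exact (hβpos _ (by positivity)).trans_le (hle Y _ _ hij)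
  have hq : ∀ (Y : Fin n → EuclideanSpace ℝ (Fin s)) (i j : Fin n), i ≠ j →
      |qfun β Y i j| ≤ 1 := by
    intro Y i j hij
    unfold qfun
    rw [abs_of_nonneg (div_nonneg (hβpos _ (by positivity)).le (hZpos Y).le)]
    exact (div_le_one (hZpos Y)).2 (hle Y i j hij)
  have hZ : ContDiff ℝ 1 (fun Y : Fin n → EuclideanSpace ℝ (Fin s) => pairZ β Y) := by
    unfold pairZ
    refine ContDiff.sum fun k _ => ContDiff.sum fun l _ => ?_
    split_ifs
    · exact hcomp β hβ1 k l
    · exact contDiff_const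
  let F : (Fin n → EuclideanSpace ℝ (Fin s)) → (Fin n → EuclideanSpace ℝ (Fin s)) :=
    fun Y i => ∑ j ∈ Finset.univ.filter (· ≠ i),
        (4 * (p i j - qfun β Y i j) * lbd β (‖Y i - Y j‖ ^ 2)) • (Y i - Y j)
  have hF : ContDiff ℝ 1 F := by
    rw [contDiff_pi]
    intro i
    refine ContDiff.sum fun j _ => ?_
    refine ContDiff.smul (ContDiff.mul (contDiff_const.mul (contDiff_const.sub ?_))
      (hcomp _ hlbd i j)) ((contDiff_apply ℝ _ i).sub (contDiff_apply ℝ _ j))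
    exact (hcomp β hβ1 i j).div hZ (fun Y => (hZpos Y).ne')
  let P : ℝ := ∑ i, ∑ j, |p i j|
  have hP0 : 0 ≤ P := Finset.sum_nonneg fun i _ => Finset.sum_nonneg fun j _ => abs_nonneg _
  have hP : ∀ i j, |p i j| ≤ P := fun i j =>
    (Finset.single_le_sum (f := fun j => |p i j|) (fun j _ => abs_nonneg _)
      (Finset.mem_univ j)).trans
    (Finset.single_le_sum (f := fun i => ∑ j, |p i j|)
      (fun i _ => Finset.sum_nonneg fun j _ => abs_nonneg _) (Finset.mem_univ i))
  have hb : ∀ Y, ‖F Y‖ ≤ (n * (4 * (P + 1) * M * 2) + 1) * ‖Y‖ := by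
    intro Y
    refine (pi_norm_le_iff_of_nonneg (by positivity)).2 fun i => ?_
    have hterm : ∀ j ∈ Finset.univ.filter (· ≠ i),
        ‖(4 * (p i j - qfun β Y i j) * lbd β (‖Y i - Y j‖ ^ 2)) • (Y i - Y j)‖
          ≤ (4 * (P + 1) * M * 2) * ‖Y‖ := by
      intro j hj
      have hij : i ≠ j := (Finset.mem_filter.1 hj).2.symm
      rw [norm_smul, Real.norm_eq_abs, abs_mul, abs_mul, abs_of_nonneg (by norm_num : (0:ℝ) ≤ 4)]
      have h1 : |p i j - qfun β Y i j| ≤ P + 1 :=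
        (abs_sub _ _).trans (add_le_add (hP i j) (hq Y i j hij))
      have h2 : |lbd β (‖Y i - Y j‖ ^ 2)| ≤ M := hM _ (by positivity)
      have h3 : ‖Y i - Y j‖ ≤ 2 * ‖Y‖ := by
        have := norm_sub_le (Y i) (Y j)
        have := norm_le_pi_norm Y i
        have := norm_le_pi_norm Y j
        linarith
      calc 4 * |p i j - qfun β Y i j| * |lbd β (‖Y i - Y j‖ ^ 2)| * ‖Y i - Y j‖
          ≤ 4 * (P + 1) * M * (2 * ‖Y‖) := by gcongr
        _ = _ := by ring
    calc ‖F Y i‖ ≤ ∑ j ∈ Finset.univ.filter (· ≠ i), (4 * (P + 1) * M * 2) * ‖Y‖ :=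
          norm_sum_le_of_le _ hterm
      _ ≤ ∑ j : Fin n, (4 * (P + 1) * M * 2) * ‖Y‖ :=
          Finset.sum_le_sum_of_subset_of_nonneg (Finset.filter_subset _ _)
            (fun _ _ _ => by positivity)
      _ = n * (4 * (P + 1) * M * 2) * ‖Y‖ := by simp; ring
      _ ≤ _ := by
          have := norm_nonneg Y
          nlinarith
  obtain ⟨Y, h0, hY⟩ := exists_global_of_linear_growth F hF _ (by positivity) hb Y₀
  refine ⟨Y, h0, fun i t _ => ?_⟩
  exact ((hasDerivAt_pi.1 (hY t)) i).hasDerivWithinAt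
end

section
/- For every integer s ≥ 1 there exists a constant η = η(s) > 0 such that for every integer n > s+1 and any n points y_1, …, y_n in ℝ^s, one has max_{i≠j} |y_i − y_j|² ≥ (1+η) · min_{k≠ℓ} |y_k − y_ℓ|². -/
open Filter Topology

lemma aux_gram (s : ℕ) (v : Fin (s + 1) → EuclideanSpace ℝ (Fin s)) (m M : ℝ)
    (h1 : ∀ i, m ≤ ‖v i‖ ^ 2 ∧ ‖v i‖ ^ 2 ≤ M)
    (h2 : ∀ i j, i ≠ j → m ≤ ‖v i - v j‖ ^ 2 ∧ ‖v i - v j‖ ^ 2 ≤ M) :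
    m / 2 ≤ (M - m) * (s + 1) := by
  have hdep : ¬ LinearIndependent ℝ v := by
    intro h
    have := h.fintype_card_le_finrank
    simp at this
  rw [Fintype.not_linearIndependent_iff] at hdep
  obtain ⟨c, hc, k, hk⟩ := hdep
  have h0 : ∑ i, ∑ j, c i * c j * inner ℝ (v i) (v j) = 0 := by
    have : inner ℝ (∑ i, c i • v i) (∑ i, c i • v i) = (0 : ℝ) := by rw [hc]; simp
    rw [sum_inner] at this
    rw [← this]
    refine Finset.sum_congr rfl fun i _ => ?_
    rw [inner_sum]
    refine Finset.sum_congr rfl fun j _ => ?_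
    rw [real_inner_smul_left, real_inner_smul_right]; ring
  have hp : ∀ i j, m / 2 * (c i * c j) + (if i = j then m / 2 * c i ^ 2 else 0)
      - (M - m) * ((c i ^ 2 + c j ^ 2) / 2) ≤ c i * c j * inner ℝ (v i) (v j) := by
    intro i j
    have hi := h1 i
    have hj := h1 j
    split_ifs with hij
    · subst hij
      rw [real_inner_self_eq_norm_sq]
      nlinarith [sq_nonneg (c i)]
    · have hd := h2 i j hij
      rw [norm_sub_sq_real] at hd
      set G := inner ℝ (v i) (v j)
      have a1 : G - m / 2 ≤ M - m := by linarith
      have a2 : -(M - m) ≤ G - m / 2 := by linarith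
      nlinarith [mul_nonneg (sub_nonneg.2 a1) (sq_nonneg (c i - c j)),
        mul_nonneg (neg_le_iff_add_nonneg.1 a2) (sq_nonneg (c i + c j)),
        mul_nonneg (sub_nonneg.2 a1) (sq_nonneg (c i + c j)),
        mul_nonneg (neg_le_iff_add_nonneg.1 a2) (sq_nonneg (c i - c j))]
  have hsum := Finset.sum_le_sum fun i (_ : i ∈ Finset.univ) =>
    Finset.sum_le_sum fun j (_ : j ∈ Finset.univ) => hp i j
  rw [h0] at hsum
  have hS : 0 < ∑ i, c i ^ 2 :=
    Finset.sum_pos' (fun i _ => sq_nonneg _) ⟨k, Finset.mem_univ _, by positivity⟩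
  have e : ∑ i, ∑ j, (m / 2 * (c i * c j) + (if i = j then m / 2 * c i ^ 2 else 0)
      - (M - m) * ((c i ^ 2 + c j ^ 2) / 2)) =
      m / 2 * (∑ i, c i) ^ 2 + m / 2 * (∑ i, c i ^ 2)
        - (M - m) * (s + 1) * ∑ i, c i ^ 2 := by
    simp only [Finset.sum_sub_distrib, Finset.sum_add_distrib, ← Finset.mul_sum,
      ← Finset.sum_div, Finset.sum_ite_eq, Finset.mem_univ, if_true, ← Finset.sum_mul,
      Finset.sum_const, Finset.card_univ, Fintype.card_fin, nsmul_eq_mul]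
    push_cast
    ring
  rw [e] at hsum
  rcases le_or_gt 0 m with hm | hm
  · have : 0 ≤ m / 2 * (∑ i, c i) ^ 2 := by positivity
    nlinarith
  · have : m ≤ M := (h1 0).1.trans (h1 0).2
    have : 0 ≤ (M - m) * (s + 1) := mul_nonneg (by linarith) (by positivity)
    linarith

/-- **Claim (3.6).** For every `s ≥ 1` there is a universal constant `η = η(s) > 0` such that
for any `n > s + 1` points `y_1, …, y_n` in `ℝ^s`,
`max_{i ≠ j} |y_i - y_j|² ≥ (1 + η) min_{k ≠ ℓ} |y_k - y_ℓ|²`.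
(This is a quantitative form of the fact that the equilateral dimension of `ℝ^s` is `s+1`.) -/
theorem max_ge_one_plus_eta_min
    (s : ℕ) (hs : 1 ≤ s) :
    ∃ η : ℝ, 0 < η ∧
      ∀ n : ℕ, s + 1 < n → ∀ y : Fin n → EuclideanSpace ℝ (Fin s),
        (1 + η) * (⨅ q : {q : Fin n × Fin n // q.1 ≠ q.2}, ‖y q.1.1 - y q.1.2‖ ^ 2)
          ≤ ⨆ q : {q : Fin n × Fin n // q.1 ≠ q.2}, ‖y q.1.1 - y q.1.2‖ ^ 2 := by
  refine ⟨1 / (2 * ((s : ℝ) + 1)), by positivity, ?_⟩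
  intro n hn y
  set f : {q : Fin n × Fin n // q.1 ≠ q.2} → ℝ := fun q => ‖y q.1.1 - y q.1.2‖ ^ 2
  have hb : ∀ a b : Fin n, a ≠ b →
      (⨅ q, f q) ≤ ‖y a - y b‖ ^ 2 ∧ ‖y a - y b‖ ^ 2 ≤ ⨆ q, f q := fun a b hab =>
    ⟨ciInf_le (Set.finite_range f).bddBelow ⟨(a, b), hab⟩,
      le_ciSup (Set.finite_range f).bddAbove ⟨(a, b), hab⟩⟩
  have key := aux_gram s
    (fun i => y ⟨i.1 + 1, by omega⟩ - y ⟨0, by omega⟩) (⨅ q, f q) (⨆ q, f q)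
    (fun i => hb _ _ (fun h => Nat.succ_ne_zero i.1 (congrArg Fin.val h)))
    (fun i j hij => by
      simp only [sub_sub_sub_cancel_right]
      exact hb _ _ (fun h => hij (Fin.ext (Nat.succ.inj (congrArg Fin.val h)))))
  have hpos : (0 : ℝ) < s + 1 := by positivity
  have h3 : (⨅ q, f q) / 2 / (s + 1) ≤ (⨆ q, f q) - ⨅ q, f q := by
    rwa [div_le_iff₀ hpos]
  have h4 : (1 + 1 / (2 * ((s : ℝ) + 1))) * (⨅ q, f q)
      = (⨅ q, f q) + (⨅ q, f q) / 2 / (s + 1) := by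
    field_simp
  rw [h4]
  linarith
end

section
/- Let Y(t) be a solution of the gradient flow of the relative entropy and set S(t) = Σ_{i=1}^n |y_i(t)|². Then S is differentiable and dS/dt = 8 Σ_{i<j} (p_{ij} − q_{ij}(Y(t))) |y_i(t) − y_j(t)|² (log β)'(|y_i(t) − y_j(t)|²), where Σ_{i<j} denotes the sum over pairs with 1 ≤ i < j ≤ n. -/
open Filter Topology

/-- Symmetrization of the pairing between a configuration and a symmetric pair interaction. -/
theorem sum_inner_symm {E : Type*} [NormedAddCommGroup E] [InnerProductSpace ℝ E] {n : ℕ}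
    (a : Fin n → Fin n → ℝ) (ha : ∀ i j, a i j = a j i) (v : Fin n → E) :
    (∑ i, ∑ j, a i j * inner ℝ (v i) (v i - v j))
      = ∑ i, ∑ j, if i < j then a i j * ‖v i - v j‖ ^ 2 else 0 := by
  have h1 : ∀ i j, a i j * inner ℝ (v i) (v i - v j)
      = (if i < j then a i j * inner ℝ (v i) (v i - v j) else 0)
        + (if j < i then a i j * inner ℝ (v i) (v i - v j) else 0) := by
    intro i j
    rcases lt_trichotomy i j with h | h | h
    · simp [h, h.not_gt]
    · subst h; simp
    · simp [h, h.not_gt]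
  rw [Finset.sum_congr rfl fun i _ => Finset.sum_congr rfl fun j _ => h1 i j]
  simp_rw [Finset.sum_add_distrib]
  rw [Finset.sum_comm (f := fun i j => if j < i then a i j * inner ℝ (v i) (v i - v j) else 0),
    ← Finset.sum_add_distrib]
  refine Finset.sum_congr rfl fun i _ => ?_
  rw [← Finset.sum_add_distrib]
  refine Finset.sum_congr rfl fun j _ => ?_
  split_ifs
  · rw [ha j i, ← real_inner_self_eq_norm_sq]
    simp only [inner_sub_left, inner_sub_right]
    ring
  · simp

/-- **Section 3 (computation of dS/dt).** Along a solution of the gradient flow,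
`S(t) = Σ_i |y_i(t)|²` is differentiable with
`dS/dt = 8 Σ_{i<j} (p_{ij} - q_{ij}) |y_i - y_j|² (log β)'(|y_i - y_j|²)`. -/
theorem derivative_of_S
    (s n : ℕ) (hs : 1 ≤ s) (hn : s + 1 < n)
    (p : Fin n → Fin n → ℝ)
    (hsymm : ∀ i j, p i j = p j i)
    (hppos : ∀ i j, i ≠ j → 0 < p i j)
    (hpsum : (∑ i, ∑ j, if i ≠ j then p i j else (0 : ℝ)) = 1)
    (β : ℝ → ℝ)
    (hβpos : ∀ x, 0 ≤ x → 0 < β x)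
    (hβsmooth : ContDiffOn ℝ (⊤ : ℕ∞) β (Set.Ici 0))
    (hβanti : AntitoneOn β (Set.Ici 0))
    (hβbdd : ∃ M : ℝ, ∀ x, 0 ≤ x → |lbd β x| ≤ M)
    (Y : ℝ → Fin n → EuclideanSpace ℝ (Fin s))
    (hflow : IsGradFlow β p Y) :
    ∀ t ∈ Set.Ici (0 : ℝ),
      HasDerivWithinAt (fun u => ∑ i, ‖Y u i‖ ^ 2)
        (8 * ∑ i, ∑ j, if i < j then
            (p i j - qfun β (Y t) i j) * ‖Y t i - Y t j‖ ^ 2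
              * lbd β (‖Y t i - Y t j‖ ^ 2)
          else 0)
        (Set.Ici 0) t := by
  intro t ht
  have hq : ∀ i j, qfun β (Y t) i j = qfun β (Y t) j i := by
    intro i j
    simp only [qfun, norm_sub_rev (Y t i) (Y t j)]
  have hd := HasDerivWithinAt.fun_sum (u := Finset.univ) fun i _ => (hflow i t ht).norm_sq
  refine hd.congr_deriv ?_
  have key := sum_inner_symm
    (fun i j => (p i j - qfun β (Y t) i j) * lbd β (‖Y t i - Y t j‖ ^ 2))
    (fun i j => by
      simp only [hsymm i j, hq i j, norm_sub_rev (Y t i) (Y t j)]) (Y t)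
  have h2 : ∀ i j, (if i < j then (p i j - qfun β (Y t) i j) * ‖Y t i - Y t j‖ ^ 2
              * lbd β (‖Y t i - Y t j‖ ^ 2) else 0)
      = if i < j then (p i j - qfun β (Y t) i j) * lbd β (‖Y t i - Y t j‖ ^ 2)
              * ‖Y t i - Y t j‖ ^ 2 else 0 := by
    intro i j
    split_ifs
    · ring
    · rfl
  simp_rw [h2]
  rw [← key, Finset.mul_sum]
  refine Finset.sum_congr rfl fun i _ => ?_
  rw [inner_sum, Finset.sum_filter, Finset.mul_sum, Finset.mul_sum]
  refine Finset.sum_congr rfl fun j _ => ?_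
  split_ifs with h
  · rw [real_inner_smul_right]
    ring
  · have h' : j = i := not_not.mp h
    subst h'
    simp
end
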